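/- For each fixed i ≥ 0, the sequence {H^i(F′_n; Q)} of rational cohomology groups of the Lagrangian flag varieties F′_n, regarded as representations of the hyperoctahedral groups W_n with the maps induced by the inclusions F′_n ↪ F′_{n+1}, is representation stable in the reversed-maps sense. Equivalently (by Borel's theorem), for each fixed i the sequence of degree-i graded pieces of the coinvariant algebras of the Weyl groups W_n is representation stable: for each double partition λ, the multiplicity of V(λ)_n in the degree-i piece is constant for sufficiently large n. -/

import Mathlib

open Equiv

/-! ### Generic representation-theoretic helpers -/

/-- The restriction of a representation to an invariant submodule. -/
def Representation.subrep {k G V : Type*} [CommSemiring k] [Monoid G] [AddCommMonoid V]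
    [Module k V] (ρ : Representation k G V) (p : Submodule k V)
    (h : ∀ g : G, ∀ v ∈ p, ρ g v ∈ p) : Representation k G p where
  toFun g := (ρ g).restrict (fun v hv => h g v hv)
  map_one' := LinearMap.ext fun v => Subtype.ext (by simp [LinearMap.restrict_apply])
  map_mul' g₁ g₂ := LinearMap.ext fun v => Subtype.ext (by
    simp [LinearMap.restrict_apply, map_mul])

/-- A `G`-action on `H` induces a representation `G →* End(H →₀ k)` in the natural way
(Mathlib's former `Representation.ofMulAction`). -/
noncomputable def Representation.ofMulActionFinsupp (k : Type*) [CommSemiring k] (G : Type*)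
    [Monoid G] (H : Type*) [MulAction G H] : Representation k G (H →₀ k) where
  toFun g := Finsupp.lmapDomain k k (g • ·)
  map_one' := by
    ext x y
    simp
  map_mul' x y := by
    ext z w
    simp [mul_smul]

/-- The space of `G`-equivariant linear maps between two representations. -/
def RepHom {k G V W : Type*} [CommSemiring k] [Monoid G] [AddCommMonoid V] [Module k V]
    [AddCommMonoid W] [Module k W] (ρ : Representation k G V) (σ : Representation k G W) :
    Submodule k (V →ₗ[k] W) where
  carrier := {f | ∀ g v, f (ρ g v) = σ g (f v)}
  add_mem' := by
    intro f₁ f₂ h₁ h₂ g v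
    simp [h₁ g v, h₂ g v]
  zero_mem' := by intro g v; simp
  smul_mem' := by
    intro c f h g v
    simp [h g v]

/-- A representation is irreducible if it is nonzero and has no proper nonzero invariant
submodule. -/
def IsIrreducibleRep {k G V : Type*} [CommSemiring k] [Monoid G] [AddCommMonoid V]
    [Module k V] (ρ : Representation k G V) : Prop :=
  (∃ v : V, v ≠ 0) ∧
    ∀ q : Submodule k V, (∀ g : G, ∀ v ∈ q, ρ g v ∈ q) → q = ⊥ ∨ q = ⊤

/-- The multiplicity of (an irreducible) representation `ρ` in `σ`, defined as the dimension
of the space of equivariant maps (over `ℚ` all the relevant irreducibles are absolutely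
irreducible, so this is the usual multiplicity). -/
noncomputable def repMult {G V W : Type*} [Monoid G] [AddCommGroup V] [Module ℚ V]
    [AddCommGroup W] [Module ℚ W] (ρ : Representation ℚ G V) (σ : Representation ℚ G W) : ℕ :=
  Module.finrank ℚ (RepHom ρ σ)

/-! ### The standard inclusions of symmetric groups -/

/-- `Fin m` is equivalent to the subtype of `Fin n` of elements `< m`, when `m ≤ n`. -/
def finCastEquivLe {m n : ℕ} (h : m ≤ n) : Fin m ≃ {i : Fin n // (i : ℕ) < m} where
  toFun i := ⟨⟨(i : ℕ), lt_of_lt_of_le i.isLt h⟩, i.isLt⟩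
  invFun j := ⟨(j.1 : ℕ), j.2⟩
  left_inv i := rfl
  right_inv j := by ext; rfl

/-- The standard inclusion `S_m ↪ S_n` for `m ≤ n`, acting on the first `m` letters. -/
def inclPermLe {m n : ℕ} (h : m ≤ n) : Equiv.Perm (Fin m) →* Equiv.Perm (Fin n) :=
  Equiv.Perm.extendDomainHom (finCastEquivLe h)

/-- The standard inclusion `S_n ↪ S_{n+1}`. -/
def inclPerm (n : ℕ) : Equiv.Perm (Fin n) →* Equiv.Perm (Fin (n + 1)) :=
  inclPermLe (Nat.le_succ n)

/-! ### Partitions -/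

/-- A partition (of its `size`), recorded as a weakly decreasing list of positive parts. -/
structure NatPartition : Type where
  parts : List ℕ
  sorted : parts.Pairwise (· ≥ ·)
  pos : ∀ p ∈ parts, 0 < p

namespace NatPartition

/-- The number `k` being partitioned. -/
def size (lam : NatPartition) : ℕ := lam.parts.sum

/-- The largest part `λ₁`. -/
def width (lam : NatPartition) : ℕ := lam.parts.headD 0

/-- The smallest `n` for which the padded partition `λ[n]` is defined,
namely `|λ| + λ₁`. -/
def minN (lam : NatPartition) : ℕ := lam.size + lam.width

end NatPartition

/-! ### An abstract system of irreducible `S_n`-representations `V(λ)_n`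

We axiomatize the family `λ ↦ V(λ)_n` (the irreducible rational representation of `S_n`
attached to the padded partition `λ[n]`), realized inside the left regular representation:
for each partition `λ` and each `n ≥ |λ| + λ₁` an invariant subspace of `ℚ[S_n]` which is
irreducible, such that distinct partitions give non-isomorphic representations, every
irreducible representation of `S_n` occurs, and the restriction of `V(λ)_{n+1}` to `S_n`
contains `V(λ)_n` (this pins down the labelling, by the branching rule). -/
structure SnIrrSystem : Type 1 where
  V : NatPartition → ∀ n : ℕ, Submodule ℚ (Equiv.Perm (Fin n) →₀ ℚ)
  inv : ∀ lam n (g : Equiv.Perm (Fin n)), ∀ x ∈ V lam n,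
    Representation.ofMulActionFinsupp ℚ (Equiv.Perm (Fin n)) (Equiv.Perm (Fin n)) g x ∈ V lam n
  irr : ∀ lam n, lam.minN ≤ n →
    IsIrreducibleRep ((Representation.ofMulActionFinsupp ℚ (Equiv.Perm (Fin n))
      (Equiv.Perm (Fin n))).subrep (V lam n) (inv lam n))
  noniso : ∀ lam mu n, lam.minN ≤ n → mu.minN ≤ n → lam ≠ mu →
    ∀ f : ↥(V lam n) →ₗ[ℚ] ↥(V mu n),
      f ∈ RepHom ((Representation.ofMulActionFinsupp ℚ (Equiv.Perm (Fin n))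
          (Equiv.Perm (Fin n))).subrep (V lam n) (inv lam n))
        ((Representation.ofMulActionFinsupp ℚ (Equiv.Perm (Fin n))
          (Equiv.Perm (Fin n))).subrep (V mu n) (inv mu n)) →
      ¬ Function.Bijective f
  complete : ∀ n (W : Type) [AddCommGroup W] [Module ℚ W]
    (σ : Representation ℚ (Equiv.Perm (Fin n)) W), IsIrreducibleRep σ →
    ∃ lam : NatPartition, lam.minN ≤ n ∧ ∃ f : ↥(V lam n) →ₗ[ℚ] W,
      f ∈ RepHom ((Representation.ofMulActionFinsupp ℚ (Equiv.Perm (Fin n))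
          (Equiv.Perm (Fin n))).subrep (V lam n) (inv lam n)) σ ∧ Function.Bijective f
  branch : ∀ lam n, lam.minN ≤ n → ∃ f : ↥(V lam n) →ₗ[ℚ] ↥(V lam (n + 1)),
    f ≠ 0 ∧ f ∈ RepHom ((Representation.ofMulActionFinsupp ℚ (Equiv.Perm (Fin n))
        (Equiv.Perm (Fin n))).subrep (V lam n) (inv lam n))
      (((Representation.ofMulActionFinsupp ℚ (Equiv.Perm (Fin (n + 1)))
          (Equiv.Perm (Fin (n + 1)))).subrep (V lam (n + 1)) (inv lam (n + 1))).comp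
        (inclPerm n))

namespace SnIrrSystem

/-- The irreducible representation `V(λ)_n` of the system. -/
noncomputable def rep (S : SnIrrSystem) (lam : NatPartition) (n : ℕ) :
    Representation ℚ (Equiv.Perm (Fin n)) ↥(S.V lam n) :=
  (Representation.ofMulActionFinsupp ℚ (Equiv.Perm (Fin n)) (Equiv.Perm (Fin n))).subrep
    (S.V lam n) (S.inv lam n)

/-- The multiplicity of `V(λ)_n` in a representation `σ` of `S_n`. -/
noncomputable def mult (S : SnIrrSystem) (lam : NatPartition) {n : ℕ} {W : Type*}
    [AddCommGroup W] [Module ℚ W] (σ : Representation ℚ (Equiv.Perm (Fin n)) W) : ℕ :=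
  repMult (S.rep lam n) σ

end SnIrrSystem

/-! ### Representation stability for sequences of `S_n`-representations -/

section SnStability

variable {M : ℕ → Type*} [∀ n, AddCommGroup (M n)] [∀ n, Module ℚ (M n)]

/-- A sequence of `S_n`-representations with maps `φ_n : V_n → V_{n+1}` is consistent if the
maps intertwine the `S_n`-action with the `S_{n+1}`-action via the standard inclusion. -/
def SnConsistent (ρ : ∀ n, Representation ℚ (Equiv.Perm (Fin n)) (M n))
    (φ : ∀ n, M n →ₗ[ℚ] M (n + 1)) : Prop :=
  ∀ n (g : Equiv.Perm (Fin n)) (v : M n),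
    φ n (ρ n g v) = ρ (n + 1) (inclPerm n g) (φ n v)

/-- Condition II (surjectivity): the span of the `S_{n+1}`-orbit of `φ_n(V_n)` is all of
`V_{n+1}`. -/
def SnSurjSpan (ρ : ∀ n, Representation ℚ (Equiv.Perm (Fin n)) (M n))
    (φ : ∀ n, M n →ₗ[ℚ] M (n + 1)) (n : ℕ) : Prop :=
  Submodule.span ℚ {x : M (n + 1) | ∃ (g : Equiv.Perm (Fin (n + 1))) (v : M n),
    x = ρ (n + 1) g (φ n v)} = ⊤

/-- Condition III (multiplicity stability): for each `λ`, the multiplicity of `V(λ)_n`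
is eventually constant. -/
def SnMultStable (S : SnIrrSystem)
    (ρ : ∀ n, Representation ℚ (Equiv.Perm (Fin n)) (M n)) : Prop :=
  ∀ lam : NatPartition, ∃ N, lam.minN ≤ N ∧
    ∀ n, N ≤ n → S.mult lam (ρ n) = S.mult lam (ρ N)

/-- Condition III′ (uniform multiplicity stability): the stabilization point can be chosen
independently of `λ`; moreover any `λ` for which `V(λ)_N` is not defined has multiplicity `0`
from then on. -/
def SnUnifMultStable (S : SnIrrSystem)
    (ρ : ∀ n, Representation ℚ (Equiv.Perm (Fin n)) (M n)) : Prop :=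
  ∃ N, (∀ lam : NatPartition, lam.minN ≤ N → ∀ n, N ≤ n →
      S.mult lam (ρ n) = S.mult lam (ρ N)) ∧
    (∀ lam : NatPartition, N < lam.minN → ∀ n, lam.minN ≤ n → S.mult lam (ρ n) = 0)

/-- Representation stability for a consistent sequence of `S_n`-representations. -/
def SnRepStable (S : SnIrrSystem)
    (ρ : ∀ n, Representation ℚ (Equiv.Perm (Fin n)) (M n))
    (φ : ∀ n, M n →ₗ[ℚ] M (n + 1)) : Prop :=
  (∃ N, ∀ n, N ≤ n → Function.Injective (φ n) ∧ SnSurjSpan ρ φ n) ∧ SnMultStable S ρ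

/-- Uniform representation stability. -/
def SnUnifRepStable (S : SnIrrSystem)
    (ρ : ∀ n, Representation ℚ (Equiv.Perm (Fin n)) (M n))
    (φ : ∀ n, M n →ₗ[ℚ] M (n + 1)) : Prop :=
  (∃ N, ∀ n, N ≤ n → Function.Injective (φ n) ∧ SnSurjSpan ρ φ n) ∧ SnUnifMultStable S ρ

end SnStability

/-! ### The hyperoctahedral groups -/

lemma inclPermLe_apply_lt {m n : ℕ} (h : m ≤ n) (σ : Equiv.Perm (Fin m)) (j : Fin n)
    (hj : (j : ℕ) < m) :
    inclPermLe h σ j = ⟨(σ ⟨(j : ℕ), hj⟩ : Fin m), lt_of_lt_of_le (σ ⟨(j : ℕ), hj⟩).isLt h⟩ := by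
  show (σ.extendDomain (finCastEquivLe h)) j = _
  rw [Equiv.Perm.extendDomain_apply_subtype (b := j) σ (finCastEquivLe h) hj]
  rfl

lemma inclPermLe_apply_not_lt {m n : ℕ} (h : m ≤ n) (σ : Equiv.Perm (Fin m)) (j : Fin n)
    (hj : ¬ (j : ℕ) < m) : inclPermLe h σ j = j := by
  show (σ.extendDomain (finCastEquivLe h)) j = _
  exact Equiv.Perm.extendDomain_apply_not_subtype (b := j) σ (finCastEquivLe h) hj

/-- The permutation action of `S_n` on sign vectors, as a homomorphism into `MulAut`. -/
def permMulAut (n : ℕ) : Equiv.Perm (Fin n) →* MulAut (Fin n → ℤˣ) where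
  toFun σ :=
    { toFun := fun ε => ε ∘ (σ⁻¹ : Equiv.Perm (Fin n))
      invFun := fun ε => ε ∘ (σ : Equiv.Perm (Fin n))
      left_inv := fun ε => by funext i; simp [Function.comp]
      right_inv := fun ε => by funext i; simp [Function.comp]
      map_mul' := fun ε₁ ε₂ => rfl }
  map_one' := by
    apply MulEquiv.ext
    intro ε
    funext i
    simp
  map_mul' σ τ := by
    apply MulEquiv.ext
    intro ε
    funext i
    simp [Function.comp, mul_inv_rev]

/-- The hyperoctahedral group `W_n = (ℤ/2) ≀ S_n`, realized as the semidirect product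
`(ℤ/2)ⁿ ⋊ S_n` of sign vectors by permutations. -/
abbrev Wgroup (n : ℕ) : Type :=
  (Fin n → ℤˣ) ⋊[permMulAut n] Equiv.Perm (Fin n)

/-- Extension of a sign vector by `+1` in the last coordinate. -/
def extendSigns (n : ℕ) : (Fin n → ℤˣ) →* (Fin (n + 1) → ℤˣ) where
  toFun ε := fun j => if h : (j : ℕ) < n then ε ⟨(j : ℕ), h⟩ else 1
  map_one' := by funext j; by_cases h : (j : ℕ) < n <;> simp [h]
  map_mul' ε₁ ε₂ := by funext j; by_cases h : (j : ℕ) < n <;> simp [h]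

/-- The standard inclusion `W_n ↪ W_{n+1}`. -/
def inclW (n : ℕ) : Wgroup n →* Wgroup (n + 1) :=
  SemidirectProduct.map (extendSigns n) (inclPerm n) (by
    intro σ
    apply MonoidHom.ext
    intro ε
    funext j
    by_cases hj : (j : ℕ) < n
    · have h1 : ((inclPerm n σ)⁻¹ : Equiv.Perm (Fin (n + 1))) j =
          ⟨((σ⁻¹ : Equiv.Perm (Fin n)) ⟨(j : ℕ), hj⟩ : Fin n), by
            exact lt_of_lt_of_le ((σ⁻¹ : Equiv.Perm (Fin n)) ⟨(j : ℕ), hj⟩).isLt (Nat.le_succ n)⟩ := by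
        rw [← map_inv]
        exact inclPermLe_apply_lt (Nat.le_succ n) σ⁻¹ j hj
      simp only [MonoidHom.comp_apply, MulEquiv.toMonoidHom_eq_coe, MonoidHom.coe_coe]
      show (extendSigns n) (ε ∘ (σ⁻¹ : Equiv.Perm (Fin n))) j =
        ((extendSigns n ε) ∘ ((inclPerm n σ)⁻¹ : Equiv.Perm (Fin (n + 1)))) j
      simp only [Function.comp_apply, h1, extendSigns, MonoidHom.coe_mk, OneHom.coe_mk]
      simp [hj]
    · have h1 : ((inclPerm n σ)⁻¹ : Equiv.Perm (Fin (n + 1))) j = j := by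
        rw [← map_inv]
        exact inclPermLe_apply_not_lt (Nat.le_succ n) σ⁻¹ j hj
      show (extendSigns n) (ε ∘ (σ⁻¹ : Equiv.Perm (Fin n))) j =
        ((extendSigns n ε) ∘ ((inclPerm n σ)⁻¹ : Equiv.Perm (Fin (n + 1)))) j
      simp only [Function.comp_apply, h1, extendSigns, MonoidHom.coe_mk, OneHom.coe_mk]
      simp [hj])

/-! ### Double partitions and an abstract system of irreducible `W_n`-representations -/

/-- A double partition `(λ⁺, λ⁻)`. -/
abbrev DoublePartition : Type := NatPartition × NatPartition

/-- The smallest `n` for which the padded double partition `λ[n]` is defined. -/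
def DoublePartition.minN (lam : DoublePartition) : ℕ :=
  lam.1.size + lam.2.size + lam.1.width

/-- An abstract system of the irreducible rational representations `V(λ)_n` of the
hyperoctahedral groups, indexed by double partitions `λ` padded to `n`; cf. `SnIrrSystem`. -/
structure WnIrrSystem : Type 1 where
  V : DoublePartition → ∀ n : ℕ, Submodule ℚ (Wgroup n →₀ ℚ)
  inv : ∀ lam n (g : Wgroup n), ∀ x ∈ V lam n,
    Representation.ofMulActionFinsupp ℚ (Wgroup n) (Wgroup n) g x ∈ V lam n
  irr : ∀ lam n, lam.minN ≤ n →
    IsIrreducibleRep ((Representation.ofMulActionFinsupp ℚ (Wgroup n) (Wgroup n)).subrep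
      (V lam n) (inv lam n))
  noniso : ∀ lam mu n, lam.minN ≤ n → mu.minN ≤ n → lam ≠ mu →
    ∀ f : ↥(V lam n) →ₗ[ℚ] ↥(V mu n),
      f ∈ RepHom ((Representation.ofMulActionFinsupp ℚ (Wgroup n) (Wgroup n)).subrep
          (V lam n) (inv lam n))
        ((Representation.ofMulActionFinsupp ℚ (Wgroup n) (Wgroup n)).subrep
          (V mu n) (inv mu n)) →
      ¬ Function.Bijective f
  complete : ∀ n (W : Type) [AddCommGroup W] [Module ℚ W]
    (σ : Representation ℚ (Wgroup n) W), IsIrreducibleRep σ →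
    ∃ lam : DoublePartition, lam.minN ≤ n ∧ ∃ f : ↥(V lam n) →ₗ[ℚ] W,
      f ∈ RepHom ((Representation.ofMulActionFinsupp ℚ (Wgroup n) (Wgroup n)).subrep
        (V lam n) (inv lam n)) σ ∧ Function.Bijective f
  branch : ∀ lam n, lam.minN ≤ n → ∃ f : ↥(V lam n) →ₗ[ℚ] ↥(V lam (n + 1)),
    f ≠ 0 ∧ f ∈ RepHom ((Representation.ofMulActionFinsupp ℚ (Wgroup n) (Wgroup n)).subrep
        (V lam n) (inv lam n))
      (((Representation.ofMulActionFinsupp ℚ (Wgroup (n + 1)) (Wgroup (n + 1))).subrep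
          (V lam (n + 1)) (inv lam (n + 1))).comp (inclW n))

namespace WnIrrSystem

/-- The irreducible representation `V(λ)_n` of the system. -/
noncomputable def rep (S : WnIrrSystem) (lam : DoublePartition) (n : ℕ) :
    Representation ℚ (Wgroup n) ↥(S.V lam n) :=
  (Representation.ofMulActionFinsupp ℚ (Wgroup n) (Wgroup n)).subrep (S.V lam n) (S.inv lam n)

/-- The multiplicity of `V(λ)_n` in a representation `σ` of `W_n`. -/
noncomputable def mult (S : WnIrrSystem) (lam : DoublePartition) {n : ℕ} {W : Type*}
    [AddCommGroup W] [Module ℚ W] (σ : Representation ℚ (Wgroup n) W) : ℕ :=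
  repMult (S.rep lam n) σ

end WnIrrSystem

section WnStability

variable {M : ℕ → Type*} [∀ n, AddCommGroup (M n)] [∀ n, Module ℚ (M n)]

/-- Consistency for a sequence of `W_n`-representations. -/
def WnConsistent (ρ : ∀ n, Representation ℚ (Wgroup n) (M n))
    (φ : ∀ n, M n →ₗ[ℚ] M (n + 1)) : Prop :=
  ∀ n (g : Wgroup n) (v : M n), φ n (ρ n g v) = ρ (n + 1) (inclW n g) (φ n v)

/-- Condition II (surjectivity) for `W_n`-sequences. -/
def WnSurjSpan (ρ : ∀ n, Representation ℚ (Wgroup n) (M n))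
    (φ : ∀ n, M n →ₗ[ℚ] M (n + 1)) (n : ℕ) : Prop :=
  Submodule.span ℚ {x : M (n + 1) | ∃ (g : Wgroup (n + 1)) (v : M n),
    x = ρ (n + 1) g (φ n v)} = ⊤

/-- Uniform multiplicity stability for `W_n`-sequences. -/
def WnUnifMultStable (S : WnIrrSystem)
    (ρ : ∀ n, Representation ℚ (Wgroup n) (M n)) : Prop :=
  ∃ N, (∀ lam : DoublePartition, lam.minN ≤ N → ∀ n, N ≤ n →
      S.mult lam (ρ n) = S.mult lam (ρ N)) ∧
    (∀ lam : DoublePartition, N < lam.minN → ∀ n, lam.minN ≤ n → S.mult lam (ρ n) = 0)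

/-- Uniform representation stability for `W_n`-sequences. -/
def WnUnifRepStable (S : WnIrrSystem)
    (ρ : ∀ n, Representation ℚ (Wgroup n) (M n))
    (φ : ∀ n, M n →ₗ[ℚ] M (n + 1)) : Prop :=
  (∃ N, ∀ n, N ≤ n → Function.Injective (φ n) ∧ WnSurjSpan ρ φ n) ∧ WnUnifMultStable S ρ

end WnStability

open MvPolynomial in
/-- The algebra map `ℚ[x_1,…,x_{n+1}] → ℚ[x_1,…,x_n]` sending `x_j ↦ x_j` for `j ≤ n` and
`x_{n+1} ↦ 0`; it corresponds to the restriction map in cohomology induced by the inclusion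
of flag varieties `F_n ↪ F_{n+1}`. -/
noncomputable def setLastToZero (n : ℕ) :
    MvPolynomial (Fin (n + 1)) ℚ →ₐ[ℚ] MvPolynomial (Fin n) ℚ :=
  aeval (fun j : Fin (n + 1) => if h : (j : ℕ) < n then X (⟨(j : ℕ), h⟩ : Fin n) else 0)


open MvPolynomial

/-- The substitution rule for the action of `w = (ε, σ) ∈ W_n` on polynomials:
`x_i ↦ ε_{σ(i)} x_{σ(i)}`. -/
noncomputable def wVars (n : ℕ) (w : Wgroup n) : Fin n → MvPolynomial (Fin n) ℚ :=
  fun i => C (((w.left ((w.right : Equiv.Perm (Fin n)) i) : ℤ) : ℚ)) *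
    X ((w.right : Equiv.Perm (Fin n)) i)

/-- The action of the hyperoctahedral group `W_n` on `ℚ[x_1,…,x_n]`, permuting and negating
the variables. -/
noncomputable def wPolyRep (n : ℕ) :
    Representation ℚ (Wgroup n) (MvPolynomial (Fin n) ℚ) where
  toFun w := (aeval (wVars n w) : MvPolynomial (Fin n) ℚ →ₐ[ℚ] _).toLinearMap
  map_one' := by
    apply LinearMap.ext
    intro p
    have h : wVars n 1 = X := by
      funext i
      simp [wVars]
    simp [h, aeval_X_left]
  map_mul' w₁ w₂ := by
    apply LinearMap.ext
    intro p
    have h : (aeval (wVars n w₁)).comp (aeval (wVars n w₂)) = aeval (wVars n (w₁ * w₂)) := by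
      apply MvPolynomial.algHom_ext
      intro i
      simp only [AlgHom.comp_apply, wVars, map_mul, aeval_X, aeval_C,
        SemidirectProduct.mul_left, SemidirectProduct.mul_right, permMulAut,
        MonoidHom.coe_mk, OneHom.coe_mk, MulEquiv.coe_mk, Equiv.coe_fn_mk,
        Equiv.Perm.coe_mul, Function.comp_apply, Pi.mul_apply, Equiv.Perm.inv_def, Equiv.symm_apply_apply,
        Units.val_mul, Int.cast_mul, map_mul, algebraMap_eq]
      ring
    have := congrArg (fun (F : MvPolynomial (Fin n) ℚ →ₐ[ℚ] MvPolynomial (Fin n) ℚ) => F p) h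
    simpa using this.symm

/-- The ideal of `ℚ[x_1,…,x_n]` generated by the `W_n`-invariant polynomials with zero
constant term. -/
noncomputable def wSymIdeal (n : ℕ) : Ideal (MvPolynomial (Fin n) ℚ) :=
  Ideal.span {p | (∀ w : Wgroup n, wPolyRep n w p = p) ∧ constantCoeff p = 0}

/-- The coinvariant algebra of the Weyl group `W_n` (of type `B_n/C_n`), as a `ℚ`-module.
By Borel's theorem it computes `H^*(F′_n;ℚ)`, the cohomology of the Lagrangian flag
variety `F′_n = Sp_{2n}(ℂ)/B`. -/
noncomputable abbrev WCoinv (n : ℕ) : Type :=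
  MvPolynomial (Fin n) ℚ ⧸ ((wSymIdeal n).restrictScalars ℚ)

/-- The degree-`i` graded piece of the `W_n`-coinvariant algebra, i.e. (by Borel's theorem)
`H^i(F′_n;ℚ)` for `2i`... (the grading is the polynomial grading). -/
noncomputable def wCoinvGrade (n i : ℕ) : Submodule ℚ (WCoinv n) :=
  Submodule.map ((wSymIdeal n).restrictScalars ℚ).mkQ (homogeneousSubmodule (Fin n) ℚ i)

/-- The sign with which `w` acts on the monomial with exponent `m`. -/
noncomputable def sgnW {n : ℕ} (w : Wgroup n) (m : Fin n → ℕ) : ℚ :=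
  ∏ j, (((w.left j : ℤˣ) : ℤ) : ℚ) ^ (m j)

/-- Number of nonzero entries of an exponent vector. -/
def suppC {n : ℕ} (m : Fin n → ℕ) : ℕ := (Finset.univ.filter (fun j => m j ≠ 0)).card

/-- Replace one exponent `b` by `c`, dually on coefficient functions. -/
noncomputable def opG (n b c : ℕ) : ((Fin n → ℕ) → ℚ) →ₗ[ℚ] ((Fin n → ℕ) → ℚ) where
  toFun p m := ∑ l, if m l = b then p (Function.update m l c) else 0
  map_add' p q := by
    funext m
    simp only [Pi.add_apply, ← Finset.sum_add_distrib]
    exact Finset.sum_congr rfl fun l _ => by split_ifs <;> simp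
  map_smul' r p := by
    funext m
    simp only [Pi.smul_apply, smul_eq_mul, RingHom.id_apply, Finset.mul_sum]
    exact Finset.sum_congr rfl fun l _ => by split_ifs <;> simp

lemma opG_apply (n b c : ℕ) (p : (Fin n → ℕ) → ℚ) (m : Fin n → ℕ) :
    opG n b c p m = ∑ l, if m l = b then p (Function.update m l c) else 0 := rfl

lemma units_even_pow (u : ℤˣ) {a : ℕ} (ha : Even a) : (((u : ℤˣ) : ℤ) : ℚ) ^ a = 1 := by
  rcases Int.units_eq_one_or u with h | h <;> simp [h, ha.neg_one_pow]

lemma sgnW_update {n : ℕ} (w : Wgroup n) (m : Fin n → ℕ) (l : Fin n) (c : ℕ)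
    (hb : Even (m l)) (hc : Even c) : sgnW w (Function.update m l c) = sgnW w m := by
  unfold sgnW
  refine Finset.prod_congr rfl fun j _ => ?_
  by_cases h : j = l
  · subst h
    rw [Function.update_self, units_even_pow _ hb, units_even_pow _ hc]
  · rw [Function.update_of_ne h]

lemma opG_equiv {n b c : ℕ} (hb : Even b) (hc : Even c) (w : Wgroup n)
    (p q : (Fin n → ℕ) → ℚ) (h : ∀ m, q m = sgnW w m * p (m ∘ w.right)) (m : Fin n → ℕ) :
    opG n b c q m = sgnW w m * opG n b c p (m ∘ w.right) := by
  rw [opG_apply, opG_apply, Finset.mul_sum]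
  refine (Equiv.sum_comp w.right _).symm.trans (Finset.sum_congr rfl fun l _ => ?_)
  simp only [Function.comp_apply]
  split_ifs with hl
  · rw [h, sgnW_update w m _ c (hl ▸ hb) hc]
    congr 2
    funext j
    by_cases hj : j = l
    · subst hj; simp
    · simp [Function.update_of_ne hj, Function.update_of_ne (w.right.injective.ne hj)]
  · simp

lemma sum_update {n : ℕ} (m : Fin n → ℕ) (l : Fin n) (c : ℕ) :
    (∑ j, Function.update m l c j) + m l = (∑ j, m j) + c := by
  rw [Finset.sum_update_of_mem (Finset.mem_univ l),
    ← Finset.add_sum_erase Finset.univ m (Finset.mem_univ l), Finset.sdiff_singleton_eq_erase]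
  omega

lemma suppC_update_zero {n : ℕ} (m : Fin n → ℕ) (l : Fin n) (h : m l ≠ 0) :
    suppC (Function.update m l 0) + 1 = suppC m := by
  unfold suppC
  have : (Finset.univ.filter (fun j => Function.update m l 0 j ≠ 0)) =
      (Finset.univ.filter (fun j => m j ≠ 0)).erase l := by
    ext j
    by_cases hj : j = l
    · subst hj; simp
    · simp [hj]
  rw [this, Finset.card_erase_add_one (by simp [h])]

lemma suppC_update_ne {n : ℕ} (m : Fin n → ℕ) (l : Fin n) (h : m l = 0) {a : ℕ} (ha : a ≠ 0) :
    suppC (Function.update m l a) = suppC m + 1 := by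
  have := suppC_update_zero (Function.update m l a) l (by simpa)
  rw [Function.update_idem, ← h, Function.update_eq_self] at this
  omega

lemma suppC_le {n : ℕ} (m : Fin n → ℕ) : suppC m ≤ ∑ j, m j := by
  unfold suppC
  rw [Finset.card_filter]
  exact Finset.sum_le_sum fun j _ => by split_ifs <;> omega

/-- The even positive numbers up to `i`. -/
def evens (i : ℕ) : Finset ℕ := (Finset.range (i + 1)).filter (fun a => Even a ∧ a ≠ 0)

lemma mem_evens {i a : ℕ} : a ∈ evens i ↔ a ≤ i ∧ Even a ∧ a ≠ 0 := by
  simp [evens, Nat.lt_succ_iff]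

/-- Adjointness of the raising and lowering operators. -/
lemma opG_adjoint {n i a : ℕ} (ha : a ≤ i) (p q : (Fin n → ℕ) → ℚ) :
    ∑ m ∈ Fintype.piFinset (fun _ : Fin n => Finset.range (i + 1)), p m * opG n a 0 q m =
    ∑ m ∈ Fintype.piFinset (fun _ : Fin n => Finset.range (i + 1)), opG n 0 a p m * q m := by
  simp only [opG_apply, Finset.mul_sum, Finset.sum_mul]
  rw [Finset.sum_comm]
  conv_rhs => rw [Finset.sum_comm]
  refine Finset.sum_congr rfl fun l _ => ?_
  simp only [mul_ite, ite_mul, mul_zero, zero_mul]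
  rw [← Finset.sum_filter, ← Finset.sum_filter]
  refine Finset.sum_nbij' (fun m => Function.update m l 0) (fun m => Function.update m l a)
    ?_ ?_ ?_ ?_ ?_
  · intro m hm
    simp only [Finset.mem_filter, Fintype.mem_piFinset, Finset.mem_range] at hm ⊢
    refine ⟨fun j => ?_, by simp⟩
    by_cases hj : j = l
    · subst hj; simp
    · simpa [hj] using hm.1 j
  · intro m hm
    simp only [Finset.mem_filter, Fintype.mem_piFinset, Finset.mem_range] at hm ⊢
    refine ⟨fun j => ?_, by simp⟩
    by_cases hj : j = l
    · subst hj; simp; omega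
    · simpa [hj] using hm.1 j
  · intro m hm
    simp only [Finset.mem_filter] at hm
    simp [← hm.2]
  · intro m hm
    simp only [Finset.mem_filter] at hm
    simp [← hm.2]
  · intro m hm
    simp only [Finset.mem_filter] at hm
    simp [← hm.2]

lemma lower_zero_of_theta {n i : ℕ} (p : (Fin n → ℕ) → ℚ) (hp : ∀ m, p m ≠ 0 → ∑ j, m j = i)
    (h : ∀ m, ∑ a ∈ evens i, opG n a 0 (opG n 0 a p) m = 0) :
    ∀ a ∈ evens i, opG n 0 a p = 0 := by
  have h1 : ∑ a ∈ evens i, ∑ m ∈ Fintype.piFinset (fun _ : Fin n => Finset.range (i + 1)),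
      opG n 0 a p m * opG n 0 a p m = 0 := by
    rw [← Finset.sum_congr rfl fun a ha => opG_adjoint (mem_evens.1 ha).1 p (opG n 0 a p),
      Finset.sum_comm]
    refine Finset.sum_eq_zero fun m _ => ?_
    rw [← Finset.mul_sum, h, mul_zero]
  intro a ha
  rw [Finset.sum_eq_zero_iff_of_nonneg
    (fun a _ => Finset.sum_nonneg fun m _ => mul_self_nonneg _)] at h1
  have h2 := h1 a ha
  rw [Finset.sum_eq_zero_iff_of_nonneg (fun m _ => mul_self_nonneg _)] at h2
  funext m
  by_cases hm : m ∈ Fintype.piFinset (fun _ : Fin n => Finset.range (i + 1))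
  · exact mul_self_eq_zero.1 (h2 m hm)
  · rw [opG_apply]
    refine Finset.sum_eq_zero fun l _ => ?_
    split_ifs with hl
    · by_contra hne
      have hs := hp _ hne
      have := sum_update m l a
      simp only [Fintype.mem_piFinset, Finset.mem_range, not_forall] at hm
      obtain ⟨j, hj⟩ := hm
      have : m j ≤ ∑ j, m j := Finset.single_le_sum (fun _ _ => Nat.zero_le _) (Finset.mem_univ j)
      omega
    · rfl

/-- `w` fixes the coordinates in `J`. -/
def fixJ {n : ℕ} (J : Finset (Fin n)) (w : Wgroup n) : Prop :=
  ∀ j ∈ J, w.left j = 1 ∧ w.right j = j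

lemma joint_kernel_inv {n i k : ℕ} (p : (Fin n → ℕ) → ℚ) (hp : ∀ m, p m ≠ 0 → ∑ j, m j = i)
    (hk : ∀ m, p m ≠ 0 → suppC m = k) (hT : ∀ a ∈ evens i, opG n 0 a p = 0)
    (J : Finset (Fin n)) (hJ : J.card < k)
    (hinv : ∀ w, fixJ J w → ∀ m, p m = sgnW w m * p (m ∘ w.right)) : p = 0 := by
  have key : ∀ c : ℕ, ∀ m : Fin n → ℕ, (Finset.univ.filter (fun j => m j ≠ 0) \ J).card = c →
      p m = 0 := by
    intro c
    induction c using Nat.strong_induction_on with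
    | _ c ih =>
    intro m hm
    by_contra hne
    have hcard := hk m hne
    obtain ⟨l, hl⟩ : (Finset.univ.filter (fun j => m j ≠ 0) \ J).Nonempty := by
      rw [Finset.sdiff_nonempty]
      intro hs
      have := Finset.card_le_card hs
      unfold suppC at hcard
      omega
    have hl' := hl
    simp only [Finset.mem_sdiff, Finset.mem_filter, Finset.mem_univ, true_and] at hl'
    obtain ⟨hl0, hlJ⟩ := hl'
    have hle : m l ≤ i := by
      rw [← hp m hne]
      exact Finset.single_le_sum (fun _ _ => Nat.zero_le _) (Finset.mem_univ l)
    rcases Nat.even_or_odd (m l) with he | ho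
    · have h0 := congrFun (hT (m l) (mem_evens.2 ⟨hle, he, hl0⟩)) (Function.update m l 0)
      rw [opG_apply] at h0
      have hterm : ∀ l', (if Function.update m l 0 l' = 0 then
          p (Function.update (Function.update m l 0) l' (m l)) else 0) =
          if (Function.update m l 0 l' = 0 ∧ l' ∉ J) then p m else 0 := by
        intro l'
        by_cases hz : Function.update m l 0 l' = 0
        · by_cases hJ' : l' ∈ J
          · simp only [hz, hJ', if_true, not_true, and_false, if_false]
            refine ih _ ?_ _ rfl
            rw [← hm]
            refine Finset.card_lt_card ((Finset.ssubset_iff_of_subset ?_).2 ⟨l, hl, ?_⟩)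
            · intro j hj
              simp only [Finset.mem_sdiff, Finset.mem_filter, Finset.mem_univ, true_and] at hj ⊢
              have hjl' : j ≠ l' := fun h => hj.2 (h ▸ hJ')
              rw [Function.update_of_ne hjl'] at hj
              by_cases hjl : j = l
              · subst hjl; simp at hj
              · rw [Function.update_of_ne hjl] at hj; exact hj
            · have hll' : l ≠ l' := fun h => hlJ (h ▸ hJ')
              simp [Function.update_of_ne hll']
          · simp only [hz, hJ', if_true, not_false_eq_true, and_self]
            have := hinv ⟨1, Equiv.swap l l'⟩ (fun j hj => ⟨rfl, Equiv.swap_apply_of_ne_of_ne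
              (fun h => hlJ (h ▸ hj)) (fun h => hJ' (h ▸ hj))⟩) m
            rw [this]
            have hs : sgnW (⟨1, Equiv.swap l l'⟩ : Wgroup n) m = 1 := by simp [sgnW]
            rw [hs, one_mul]
            congr 1
            funext j
            simp only [Function.comp_apply]
            by_cases hj : j = l'
            · subst hj; simp
            · rw [Function.update_of_ne hj]
              by_cases hjl : j = l
              · subst hjl
                rw [Function.update_of_ne (Ne.symm hj)] at hz
                simp [hz]
              · rw [Function.update_of_ne hjl, Equiv.swap_apply_of_ne_of_ne hjl hj]
        · simp [hz]
      rw [Finset.sum_congr rfl fun l' _ => hterm l', ← Finset.sum_filter, Finset.sum_const,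
        nsmul_eq_mul, Pi.zero_apply, mul_eq_zero] at h0
      rcases h0 with h0 | h0
      · rw [Nat.cast_eq_zero, Finset.card_eq_zero] at h0
        have : l ∈ (∅ : Finset (Fin n)) := by rw [← h0]; simp [hlJ]
        simp at this
      · exact hne h0
    · have := hinv ⟨Function.update 1 l (-1), 1⟩ (fun j hj => ⟨by
        have : j ≠ l := fun h => hlJ (h ▸ hj)
        simp [this], rfl⟩) m
      have hs : sgnW (⟨Function.update 1 l (-1), 1⟩ : Wgroup n) m = -1 := by
        unfold sgnW
        rw [Finset.prod_eq_single l]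
        · simp [ho.neg_one_pow]
        · intro j _ hj; simp [hj]
        · simp
      rw [hs] at this
      apply hne
      have h2 : p m = - p m := by
        conv_lhs => rw [this]
        simp
      linarith
  funext m
  exact key _ m rfl

section HomSpaces

set_option maxSynthPendingDepth 3

variable {n : ℕ} {V : Type*} [AddCommGroup V] [Module ℚ V]

/-- Equivariant maps to coefficient functions supported in degree `i`. -/
def Etot (ρ : Representation ℚ (Wgroup n) V) (i : ℕ) :
    Submodule ℚ (V →ₗ[ℚ] ((Fin n → ℕ) → ℚ)) where
  carrier := {f | (∀ w v m, f (ρ w v) m = sgnW w m * f v (m ∘ w.right)) ∧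
    ∀ v m, f v m ≠ 0 → ∑ j, m j = i}
  add_mem' := by
    rintro f g ⟨hf, hf'⟩ ⟨hg, hg'⟩
    refine ⟨fun w v m => ?_, fun v m h => ?_⟩
    · simp only [LinearMap.add_apply, Pi.add_apply, hf, hg]; ring
    · by_cases h1 : f v m = 0
      · exact hg' v m fun h2 => h (by simp [h1, h2])
      · exact hf' v m h1
  zero_mem' := ⟨fun w v m => by simp, fun v m h => by simp at h⟩
  smul_mem' := by
    rintro c f ⟨hf, hf'⟩
    refine ⟨fun w v m => ?_, fun v m h => ?_⟩
    · simp only [LinearMap.smul_apply, Pi.smul_apply, hf, smul_eq_mul]; ring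
    · exact hf' v m fun h2 => h (by simp [h2])

/-- The part of `Etot` supported on exponent vectors with exactly `k` nonzero entries. -/
def Ek (ρ : Representation ℚ (Wgroup n) V) (k i : ℕ) :
    Submodule ℚ (V →ₗ[ℚ] ((Fin n → ℕ) → ℚ)) :=
  Etot ρ i ⊓
  { carrier := {f | ∀ v m, f v m ≠ 0 → suppC m = k}
    add_mem' := by
      intro f g hf' hg' v m h
      by_cases h1 : f v m = 0
      · exact hg' v m fun h2 => h (by simp [h1, h2])
      · exact hf' v m h1
    zero_mem' := fun v m h => by simp at h
    smul_mem' := by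
      intro c f hf' v m h
      exact hf' v m fun h2 => h (by simp [h2]) }

lemma mem_Ek {ρ : Representation ℚ (Wgroup n) V} {k i : ℕ}
    {f : V →ₗ[ℚ] ((Fin n → ℕ) → ℚ)} :
    f ∈ Ek ρ k i ↔ ((∀ w v m, f (ρ w v) m = sgnW w m * f v (m ∘ w.right)) ∧
      ∀ v m, f v m ≠ 0 → ∑ j, m j = i) ∧ ∀ v m, f v m ≠ 0 → suppC m = k := Iff.rfl

lemma Etot_finite [Module.Finite ℚ V] (ρ : Representation ℚ (Wgroup n) V) (i : ℕ) :
    Module.Finite ℚ (Etot ρ i) := by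
  let R : ((Fin n → ℕ) → ℚ) →ₗ[ℚ] ((Fin n → Fin (i + 1)) → ℚ) :=
    LinearMap.funLeft ℚ ℚ (fun m j => (m j : ℕ))
  let L : Etot ρ i →ₗ[ℚ] (V →ₗ[ℚ] ((Fin n → Fin (i + 1)) → ℚ)) :=
    { toFun := fun f => R ∘ₗ f.1
      map_add' := fun f g => by ext; simp
      map_smul' := fun c f => by ext; simp }
  refine Module.Finite.of_injective L ?_
  refine (injective_iff_map_eq_zero L).2 ?_
  intro f hf
  ext v m
  change f.1 v m = 0
  by_contra hne
  have hs := f.2.2 v m hne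
  have hlt : ∀ j, m j < i + 1 := fun j => by
    have : m j ≤ ∑ j, m j := Finset.single_le_sum (fun _ _ => Nat.zero_le _) (Finset.mem_univ j)
    omega
  exact hne (congrFun (LinearMap.congr_fun hf v) (fun j => ⟨m j, hlt j⟩))

lemma Ek_finite [Module.Finite ℚ V] (ρ : Representation ℚ (Wgroup n) V) (k i : ℕ) :
    Module.Finite ℚ (Ek ρ k i) := by
  have := Etot_finite ρ i
  exact Submodule.finiteDimensional_of_le (inf_le_left : Ek ρ k i ≤ Etot ρ i)

/-- Postcomposition with `opG`. -/
noncomputable def opH (V : Type*) [AddCommGroup V] [Module ℚ V] (n b c : ℕ) :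
    (V →ₗ[ℚ] ((Fin n → ℕ) → ℚ)) →ₗ[ℚ] (V →ₗ[ℚ] ((Fin n → ℕ) → ℚ)) where
  toFun f := opG n b c ∘ₗ f
  map_add' f g := by ext; simp
  map_smul' r f := by ext; simp

lemma opH_apply (b c : ℕ) (f : V →ₗ[ℚ] ((Fin n → ℕ) → ℚ)) (v : V) :
    opH V n b c f v = opG n b c (f v) := rfl

lemma opG_ne {b c : ℕ} {p : (Fin n → ℕ) → ℚ} {m : Fin n → ℕ} (h : opG n b c p m ≠ 0) :
    ∃ l, m l = b ∧ p (Function.update m l c) ≠ 0 := by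
  rw [opG_apply] at h
  obtain ⟨l, _, hl⟩ := Finset.exists_ne_zero_of_sum_ne_zero h
  by_cases h1 : m l = b
  · exact ⟨l, h1, by simpa [h1] using hl⟩
  · simp [h1] at hl

lemma lower_mem {ρ : Representation ℚ (Wgroup n) V} {k i a : ℕ} (ha : a ∈ evens i)
    {f : V →ₗ[ℚ] ((Fin n → ℕ) → ℚ)} (hf : f ∈ Ek ρ (k + 1) i) :
    opH V n 0 a f ∈ Ek ρ k (i - a) := by
  obtain ⟨ha1, ha2, ha3⟩ := mem_evens.1 ha
  refine mem_Ek.2 ⟨⟨fun w v m => ?_, fun v m h => ?_⟩, fun v m h => ?_⟩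
  · exact opG_equiv Even.zero ha2 w _ _ (hf.1.1 w v) m
  · obtain ⟨l, hl, hne⟩ := opG_ne h
    have h1 := hf.1.2 _ _ hne
    have h2 := sum_update m l a
    omega
  · obtain ⟨l, hl, hne⟩ := opG_ne h
    have h1 := hf.2 _ _ hne
    have h2 := suppC_update_ne m l hl ha3
    omega

lemma raise_mem {ρ : Representation ℚ (Wgroup n) V} {k i a : ℕ} (ha : a ∈ evens i)
    {f : V →ₗ[ℚ] ((Fin n → ℕ) → ℚ)} (hf : f ∈ Ek ρ k (i - a)) :
    opH V n a 0 f ∈ Ek ρ (k + 1) i := by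
  obtain ⟨ha1, ha2, ha3⟩ := mem_evens.1 ha
  refine mem_Ek.2 ⟨⟨fun w v m => ?_, fun v m h => ?_⟩, fun v m h => ?_⟩
  · exact opG_equiv ha2 Even.zero w _ _ (hf.1.1 w v) m
  · obtain ⟨l, hl, hne⟩ := opG_ne h
    have h1 := hf.1.2 _ _ hne
    have h2 := sum_update m l 0
    omega
  · obtain ⟨l, hl, hne⟩ := opG_ne h
    have h1 := hf.2 _ _ hne
    have h2 := suppC_update_zero m l (by omega)
    omega

/-- For an irreducible representation an equivariant map killing a nonzero vector is zero. -/
lemma irr_zero {ρ : Representation ℚ (Wgroup n) V} (hirr : IsIrreducibleRep ρ) {i : ℕ}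
    {f : V →ₗ[ℚ] ((Fin n → ℕ) → ℚ)} (hf : f ∈ Etot ρ i) {v : V} (hv : v ≠ 0) (h0 : f v = 0) :
    f = 0 := by
  rcases hirr.2 (LinearMap.ker f) (fun g u hu => by
    rw [LinearMap.mem_ker] at hu ⊢
    funext m
    rw [hf.1, hu]; simp) with h | h
  · exact absurd ((Submodule.mem_bot ℚ).1 (h ▸ (LinearMap.mem_ker.2 h0))) hv
  · exact LinearMap.ker_eq_top.1 h

/-- The subgroup fixing the coordinates in `J`. -/
def fixSub (J : Finset (Fin n)) : Subgroup (Wgroup n) where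
  carrier := {w | fixJ J w}
  one_mem' := fun j _ => ⟨rfl, rfl⟩
  mul_mem' := by
    intro a b ha hb j hj
    obtain ⟨h1, h2⟩ := ha j hj
    obtain ⟨h3, h4⟩ := hb j hj
    have h5 : a.right⁻¹ j = j := by rw [Equiv.Perm.inv_eq_iff_eq, h2]
    refine ⟨?_, ?_⟩
    · rw [SemidirectProduct.mul_left, Pi.mul_apply, h1, one_mul]
      change b.left (a.right⁻¹ j) = 1
      rw [h5, h3]
    · rw [SemidirectProduct.mul_right, Equiv.Perm.mul_apply, h4, h2]
  inv_mem' := by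
    intro a ha j hj
    obtain ⟨h1, h2⟩ := ha j hj
    refine ⟨?_, ?_⟩
    · rw [SemidirectProduct.inv_left]
      change (a.left⁻¹) (a.right⁻¹⁻¹ j) = 1
      rw [inv_inv, h2, Pi.inv_apply, h1, inv_one]
    · rw [SemidirectProduct.inv_right, Equiv.Perm.inv_eq_iff_eq, h2]

lemma Wgroup_finite (n : ℕ) : Finite (Wgroup n) :=
  Finite.of_equiv _ (SemidirectProduct.equivProd (φ := permMulAut n)).symm

/-- Key vanishing lemma. -/
lemma kernel_vanish {ρ : Representation ℚ (Wgroup n) V} (hirr : IsIrreducibleRep ρ)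
    {d k i i' : ℕ} (hdk : d < k) {f : V →ₗ[ℚ] ((Fin n → ℕ) → ℚ)} (hf : f ∈ Ek ρ d i')
    (hf0 : f ≠ 0) {g : V →ₗ[ℚ] ((Fin n → ℕ) → ℚ)} (hg : g ∈ Ek ρ k i)
    (hT : ∀ a ∈ evens i, opH V n 0 a g = 0) : g = 0 := by
  obtain ⟨v0, m, hne⟩ : ∃ v0 m, f v0 m ≠ 0 := by
    by_contra hcon
    push Not at hcon
    exact hf0 (LinearMap.ext fun v => funext fun m => hcon v m)
  let J : Finset (Fin n) := Finset.univ.filter (fun j => m j ≠ 0)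
  have hJ : J.card = d := hf.2 v0 m hne
  have := Wgroup_finite n
  have : Fintype (fixSub J) := Fintype.ofFinite _
  let v : V := ∑ w : fixSub J, ρ w.1 v0
  have hfix : ∀ w ∈ fixSub J, sgnW w m = 1 ∧ m ∘ w.right = m := by
    intro w hw
    constructor
    · unfold sgnW
      refine Finset.prod_eq_one fun j _ => ?_
      by_cases hj : m j = 0
      · simp [hj]
      · rw [(hw j (by simp [J, hj])).1]; simp
    · funext j
      simp only [Function.comp_apply]
      by_cases hj : m j = 0
      · by_contra hne'
        have h1 : m (w.right j) ≠ 0 := by rwa [hj] at hne'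
        have h2 := (hw (w.right j) (by simp [J, h1])).2
        rw [w.right.injective h2] at h1
        exact h1 hj
      · rw [(hw j (by simp [J, hj])).2]
  have hv : v ≠ 0 := by
    intro h0
    have h1 : f v m = 0 := by rw [h0]; simp
    simp only [v, map_sum, Finset.sum_apply] at h1
    rw [Finset.sum_congr rfl (g := fun _ => f v0 m) (fun w _ => by
      rw [hf.1.1, (hfix w.1 w.2).1, (hfix w.1 w.2).2, one_mul])] at h1
    rw [Finset.sum_const, nsmul_eq_mul, mul_eq_zero] at h1
    rcases h1 with h1 | h1
    · simp at h1
    · exact hne h1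
  refine irr_zero hirr hg.1 hv ?_
  refine joint_kernel_inv (g v) (hg.1.2 v) (hg.2 v)
    (fun a ha => LinearMap.congr_fun (hT a ha) v) J (by omega) ?_
  intro w hw m'
  rw [← hg.1.1]
  suffices hs : v = ρ w v by rw [← hs]
  simp only [v, map_sum]
  let w' : fixSub J := ⟨w, hw⟩
  refine (Equiv.sum_comp (Equiv.mulLeft w') (fun u : fixSub J => ρ u.1 v0)).symm.trans ?_
  refine Finset.sum_congr rfl fun u _ => ?_
  simp [w', map_mul]

/-- The operator `Σ_a U_a T_a`. -/
noncomputable def theta (V : Type*) [AddCommGroup V] [Module ℚ V] (n i : ℕ) :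
    (V →ₗ[ℚ] ((Fin n → ℕ) → ℚ)) →ₗ[ℚ] (V →ₗ[ℚ] ((Fin n → ℕ) → ℚ)) :=
  ∑ a ∈ evens i, opH V n a 0 ∘ₗ opH V n 0 a

lemma theta_apply (i : ℕ) (f : V →ₗ[ℚ] ((Fin n → ℕ) → ℚ)) :
    theta V n i f = ∑ a ∈ evens i, opH V n a 0 (opH V n 0 a f) := by
  simp [theta, LinearMap.sum_apply]

lemma theta_inj {ρ : Representation ℚ (Wgroup n) V} (hirr : IsIrreducibleRep ρ)
    {d k i i' : ℕ} (hdk : d < k) {f : V →ₗ[ℚ] ((Fin n → ℕ) → ℚ)} (hf : f ∈ Ek ρ d i')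
    (hf0 : f ≠ 0) {g : V →ₗ[ℚ] ((Fin n → ℕ) → ℚ)} (hg : g ∈ Ek ρ k i)
    (hT : theta V n i g = 0) : g = 0 := by
  refine kernel_vanish hirr hdk hf hf0 hg fun a ha => LinearMap.ext fun v => ?_
  refine lower_zero_of_theta (g v) (hg.1.2 v) (fun m => ?_) a ha
  have := congrFun (LinearMap.congr_fun hT v) m
  rw [theta_apply] at this
  simpa [LinearMap.sum_apply, opH_apply] using this

lemma theta_surj [Module.Finite ℚ V] {ρ : Representation ℚ (Wgroup n) V}
    (hirr : IsIrreducibleRep ρ)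
    {d k i i' : ℕ} (hdk : d < k + 1) {f : V →ₗ[ℚ] ((Fin n → ℕ) → ℚ)} (hf : f ∈ Ek ρ d i')
    (hf0 : f ≠ 0) {g : V →ₗ[ℚ] ((Fin n → ℕ) → ℚ)} (hg : g ∈ Ek ρ (k + 1) i) :
    ∃ g' ∈ Ek ρ (k + 1) i, theta V n i g' = g := by
  have := Ek_finite ρ (k + 1) i
  let L : Ek ρ (k + 1) i →ₗ[ℚ] Ek ρ (k + 1) i := (theta V n i).restrict (fun x hx => by
    rw [theta_apply]
    exact Submodule.sum_mem _ fun a ha => raise_mem ha (lower_mem ha hx))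
  have hinj : Function.Injective L := by
    refine (injective_iff_map_eq_zero L).2 ?_
    intro x hx
    exact Subtype.ext (theta_inj hirr hdk hf hf0 x.2 (congrArg Subtype.val hx))
  obtain ⟨y, hy⟩ := (LinearMap.surjective_of_injective (f := L) hinj) ⟨g, hg⟩
  exact ⟨y.1, y.2, congrArg Subtype.val hy⟩

end HomSpaces

section Slices

set_option maxSynthPendingDepth 3

variable {n : ℕ} {V V' : Type*} [AddCommGroup V] [Module ℚ V] [AddCommGroup V'] [Module ℚ V']

lemma inclPerm_castSucc (σ : Equiv.Perm (Fin n)) (j : Fin n) :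
    inclPerm n σ j.castSucc = (σ j).castSucc := by
  have := inclPermLe_apply_lt (Nat.le_succ n) σ j.castSucc (by simp)
  exact this

lemma inclPerm_last (σ : Equiv.Perm (Fin n)) :
    inclPerm n σ (Fin.last n) = Fin.last n :=
  inclPermLe_apply_not_lt (Nat.le_succ n) σ (Fin.last n) (by simp)

lemma inclW_left_castSucc (w : Wgroup n) (j : Fin n) :
    (inclW n w).left j.castSucc = w.left j := by
  simp [inclW, extendSigns]

lemma inclW_left_last (w : Wgroup n) : (inclW n w).left (Fin.last n) = 1 := by
  simp [inclW, extendSigns]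

lemma inclW_right (w : Wgroup n) : (inclW n w).right = inclPerm n w.right := rfl

lemma sgnW_incl (w : Wgroup n) (m : Fin n → ℕ) (b : ℕ) :
    sgnW (inclW n w) (Fin.snoc m b : Fin (n + 1) → ℕ) = sgnW w m := by
  unfold sgnW
  rw [Fin.prod_univ_castSucc]
  simp [inclW_left_castSucc, inclW_left_last]

lemma snoc_comp_incl (w : Wgroup n) (m : Fin n → ℕ) (b : ℕ) :
    (Fin.snoc m b : Fin (n + 1) → ℕ) ∘ (inclW n w).right =
      (Fin.snoc (m ∘ w.right) b : Fin (n + 1) → ℕ) := by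
  funext j
  refine Fin.lastCases ?_ (fun j => ?_) j
  · simp [inclW_right, inclPerm_last]
  · simp [inclW_right, inclPerm_castSucc]

lemma suppC_snoc (m : Fin n → ℕ) (b : ℕ) :
    suppC (Fin.snoc m b : Fin (n + 1) → ℕ) = suppC m + if b = 0 then 0 else 1 := by
  unfold suppC
  rw [Finset.card_filter, Finset.card_filter, Fin.sum_univ_castSucc]
  simp

lemma sum_snoc' (m : Fin n → ℕ) (b : ℕ) :
    ∑ j, (Fin.snoc m b : Fin (n + 1) → ℕ) j = ∑ j, m j + b := by
  rw [Fin.sum_univ_castSucc]; simp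

/-- Restrict along `ι` and take the coefficient of `x_{n+1}^b`. -/
noncomputable def slice (ι : V →ₗ[ℚ] V') (b : ℕ) :
    (V' →ₗ[ℚ] ((Fin (n + 1) → ℕ) → ℚ)) →ₗ[ℚ] (V →ₗ[ℚ] ((Fin n → ℕ) → ℚ)) where
  toFun f := LinearMap.funLeft ℚ ℚ (fun m : Fin n → ℕ => (Fin.snoc m b : Fin (n + 1) → ℕ)) ∘ₗ
    f ∘ₗ ι
  map_add' f g := by ext; simp
  map_smul' r f := by ext; simp

lemma slice_apply (ι : V →ₗ[ℚ] V') (b : ℕ) (f : V' →ₗ[ℚ] ((Fin (n + 1) → ℕ) → ℚ)) (v : V)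
    (m : Fin n → ℕ) : slice ι b f v m = f (ι v) (Fin.snoc m b : Fin (n + 1) → ℕ) := rfl

variable {ρ : Representation ℚ (Wgroup n) V} {ρ' : Representation ℚ (Wgroup (n + 1)) V'}
  {ι : V →ₗ[ℚ] V'}

lemma slice_mem_tot (hι : ∀ w v, ι (ρ w v) = ρ' (inclW n w) (ι v))
    {i : ℕ} (b : ℕ) {f : V' →ₗ[ℚ] ((Fin (n + 1) → ℕ) → ℚ)}
    (hf : f ∈ Etot ρ' i) : slice ι b f ∈ Etot ρ (i - b) := by
  refine ⟨fun w v m => ?_, fun v m h => ?_⟩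
  · rw [slice_apply, hι, hf.1, sgnW_incl, snoc_comp_incl]; rfl
  · have := hf.2 _ _ h
    rw [sum_snoc'] at this
    omega

lemma slice_zero_mem (hι : ∀ w v, ι (ρ w v) = ρ' (inclW n w) (ι v))
    {k i : ℕ} {f : V' →ₗ[ℚ] ((Fin (n + 1) → ℕ) → ℚ)}
    (hf : f ∈ Ek ρ' k i) : slice ι 0 f ∈ Ek ρ k i := by
  refine ⟨slice_mem_tot hι 0 hf.1, fun v m h => ?_⟩
  have := hf.2 _ _ h
  rw [suppC_snoc] at this
  simpa using this

lemma slice_pos_mem (hι : ∀ w v, ι (ρ w v) = ρ' (inclW n w) (ι v))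
    {k i b : ℕ} (hb : b ≠ 0) {f : V' →ₗ[ℚ] ((Fin (n + 1) → ℕ) → ℚ)}
    (hf : f ∈ Ek ρ' (k + 1) i) : slice ι b f ∈ Ek ρ k (i - b) := by
  refine ⟨slice_mem_tot hι b hf.1, fun v m h => ?_⟩
  have := hf.2 _ _ h
  rw [suppC_snoc] at this
  simpa [hb] using this

lemma slice_pos_zero {i b : ℕ} (hb : b ≠ 0) {f : V' →ₗ[ℚ] ((Fin (n + 1) → ℕ) → ℚ)}
    (hf : f ∈ Ek ρ' 0 i) : slice ι b f = 0 := by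
  ext v m
  by_contra hne
  have := hf.2 _ _ hne
  rw [suppC_snoc] at this
  simp [hb] at this

lemma slice_all_zero (hirr : IsIrreducibleRep ρ') (hι0 : ι ≠ 0) {i : ℕ}
    {f : V' →ₗ[ℚ] ((Fin (n + 1) → ℕ) → ℚ)} (hf : f ∈ Etot ρ' i) (h : ∀ b, slice ι b f = 0) :
    f = 0 := by
  obtain ⟨v, hv⟩ : ∃ v, ι v ≠ 0 := by
    by_contra hcon
    push Not at hcon
    exact hι0 (LinearMap.ext hcon)
  refine irr_zero hirr hf hv ?_
  funext m
  have := congrFun (LinearMap.congr_fun (h (m (Fin.last n))) v) (Fin.init m)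
  rw [slice_apply, Fin.snoc_init_self] at this
  exact this

lemma slice_raise {a : ℕ} (ha : a ≠ 0) (f : V' →ₗ[ℚ] ((Fin (n + 1) → ℕ) → ℚ)) :
    slice ι 0 (opH V' (n + 1) a 0 f) = opH V n a 0 (slice ι 0 f) := by
  ext v m
  change slice ι 0 (opH V' (n + 1) a 0 f) v m = opH V n a 0 (slice ι 0 f) v m
  rw [slice_apply, opH_apply, opH_apply, opG_apply, opG_apply, Fin.sum_univ_castSucc]
  simp only [Fin.snoc_last, Fin.snoc_castSucc, Ne.symm ha, if_false, add_zero, slice_apply,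
    Fin.snoc_update]

end Slices

lemma antitone_eventually_const (u : ℕ → ℕ) (N : ℕ) (h : ∀ n, N ≤ n → u (n + 1) ≤ u n) :
    ∃ N', N ≤ N' ∧ ∀ n, N' ≤ n → u n = u N' := by
  obtain ⟨N', hN', hmin⟩ := WellFounded.has_min (measure u).wf {n | N ≤ n} ⟨N, le_refl N⟩
  refine ⟨N', hN', fun n hn => ?_⟩
  have h1 : u n ≤ u N' := by
    induction n, hn using Nat.le_induction with
    | base => exact le_rfl
    | succ m hm ih => exact (h m (le_trans hN' hm)).trans ih
  have h2 : ¬ u n < u N' := hmin n (le_trans hN' hn : N ≤ n)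
  omega

lemma monotone_eventually_const (u : ℕ → ℕ) (N B : ℕ) (h : ∀ n, N ≤ n → u n ≤ u (n + 1))
    (hB : ∀ n, N ≤ n → u n ≤ B) :
    ∃ N', N ≤ N' ∧ ∀ n, N' ≤ n → u n = u N' := by
  obtain ⟨N', hN', hc⟩ := antitone_eventually_const (fun n => B - u n) N
    (fun n hn => by have := h n hn; omega)
  refine ⟨N', hN', fun n hn => ?_⟩
  have h1 := hc n hn
  have h2 := hB n (by omega)
  have h3 := hB N' hN'
  omega

section Stab

set_option maxSynthPendingDepth 3

variable {V : ℕ → Type*} [∀ n, AddCommGroup (V n)] [∀ n, Module ℚ (V n)]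
  [∀ n, Module.Finite ℚ (V n)] {ρ : ∀ n, Representation ℚ (Wgroup n) (V n)}
  {ι : ∀ n, V n →ₗ[ℚ] V (n + 1)}

lemma base_inj {n d : ℕ} (hirr : IsIrreducibleRep (ρ (n + 1))) (hι0 : ι n ≠ 0)
    (hι : ∀ w v, ι n (ρ n w v) = ρ (n + 1) (inclW n w) (ι n v))
    (hZ : ∀ j < d, ∀ i, ∀ f ∈ Ek (ρ n) j i, f = 0) {i : ℕ}
    {f : V (n + 1) →ₗ[ℚ] ((Fin (n + 1) → ℕ) → ℚ)} (hf : f ∈ Ek (ρ (n + 1)) d i)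
    (h0 : slice (ι n) 0 f = 0) : f = 0 := by
  refine slice_all_zero hirr hι0 hf.1 fun b => ?_
  by_cases hb : b = 0
  · rw [hb, h0]
  · cases d with
    | zero => exact slice_pos_zero hb hf
    | succ k => exact hZ k (Nat.lt_succ_self k) _ _ (slice_pos_mem hι hb hf)

lemma mono_Z {n e : ℕ} (hirr : IsIrreducibleRep (ρ (n + 1))) (hι0 : ι n ≠ 0)
    (hι : ∀ w v, ι n (ρ n w v) = ρ (n + 1) (inclW n w) (ι n v))
    (hZ : ∀ j < e, ∀ i, ∀ f ∈ Ek (ρ n) j i, f = 0) :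
    ∀ j < e, ∀ i, ∀ f ∈ Ek (ρ (n + 1)) j i, f = 0 := by
  intro j hj i f hf
  exact base_inj hirr hι0 hι (fun j' hj' => hZ j' (by omega)) hf
    (hZ j hj _ _ (slice_zero_mem hι hf))

/-- Good behaviour of the homs with support `k` in degree `i` from `N` on, with bound `B`. -/
def GoodK (ρ : ∀ n, Representation ℚ (Wgroup n) (V n)) (ι : ∀ n, V n →ₗ[ℚ] V (n + 1))
    (k i N B : ℕ) : Prop :=
  ∀ n, N ≤ n → (∀ f ∈ Ek (ρ n) k i, ∃ F ∈ Ek (ρ (n + 1)) k i, slice (ι n) 0 F = f) ∧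
    Module.finrank ℚ (Ek (ρ n) k i) ≤ B

lemma GoodK_of_zero {k i N : ℕ} (h : ∀ n, N ≤ n → ∀ f ∈ Ek (ρ n) k i, f = 0) :
    GoodK ρ ι k i N 0 := by
  intro n hn
  refine ⟨fun f hf => ⟨0, Submodule.zero_mem _, by rw [h n hn f hf, map_zero]⟩, ?_⟩
  have : Ek (ρ n) k i = ⊥ := (Submodule.eq_bot_iff _).2 (h n hn)
  rw [this]
  simp

lemma GoodK_base {N d : ℕ} (hirr : ∀ n, N ≤ n → IsIrreducibleRep (ρ n))
    (hι0 : ∀ n, N ≤ n → ι n ≠ 0)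
    (hι : ∀ n, N ≤ n → ∀ w v, ι n (ρ n w v) = ρ (n + 1) (inclW n w) (ι n v))
    (hZ : ∀ n, N ≤ n → ∀ j < d, ∀ i, ∀ f ∈ Ek (ρ n) j i, f = 0) (i : ℕ) :
    ∃ N' B, GoodK ρ ι d i N' B := by
  have hfin : ∀ n, Module.Finite ℚ (Ek (ρ n) d i) := fun n => Ek_finite _ _ _
  have hL : ∀ n, N ≤ n → ∃ L : Ek (ρ (n + 1)) d i →ₗ[ℚ] Ek (ρ n) d i,
      Function.Injective L ∧ ∀ x, (L x).1 = slice (ι n) 0 x.1 := by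
    intro n hn
    let L : Ek (ρ (n + 1)) d i →ₗ[ℚ] Ek (ρ n) d i :=
      (slice (ι n) 0).restrict (fun x hx => slice_zero_mem (hι n hn) hx)
    refine ⟨L, (injective_iff_map_eq_zero L).2 fun x hx => Subtype.ext ?_, fun x => rfl⟩
    exact base_inj (hirr _ (by omega)) (hι0 n hn) (hι n hn) (hZ n hn) x.2
      (congrArg Subtype.val hx)
  obtain ⟨N', hN', hc⟩ := antitone_eventually_const
    (fun n => Module.finrank ℚ (Ek (ρ n) d i)) N (fun n hn => by
      obtain ⟨L, hL1, _⟩ := hL n hn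
      exact LinearMap.finrank_le_finrank_of_injective hL1)
  refine ⟨N', Module.finrank ℚ (Ek (ρ N') d i), fun n hn => ⟨fun f hf => ?_, (hc n hn).le⟩⟩
  obtain ⟨L, hL1, hL2⟩ := hL n (by omega)
  have hs : Function.Surjective L :=
    (LinearMap.injective_iff_surjective_of_finrank_eq_finrank
      ((hc (n + 1) (by omega)).trans (hc n hn).symm)).1 hL1
  obtain ⟨F, hF⟩ := hs ⟨f, hf⟩
  exact ⟨F.1, F.2, by rw [← hL2, hF]⟩

lemma GoodK_step {N d k : ℕ} (hirr : ∀ n, N ≤ n → IsIrreducibleRep (ρ n))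
    (hnz : ∀ n, N ≤ n → ∃ i, ∃ f ∈ Ek (ρ n) d i, f ≠ 0) (hdk : d < k + 1)
    (ih : ∀ i, ∃ N' B, GoodK ρ ι k i N' B) (i : ℕ) :
    ∃ N' B, GoodK ρ ι (k + 1) i N' B := by
  choose Nf Bf hgood using ih
  refine ⟨max N ((evens i).sup fun a => Nf (i - a)), ∑ a : evens i, Bf (i - a.1),
    fun n hn => ?_⟩
  have hn1 : N ≤ n := le_trans (le_max_left _ _) hn
  have hn2 : ∀ a ∈ evens i, Nf (i - a) ≤ n := fun a ha =>
    le_trans (Finset.le_sup (f := fun a => Nf (i - a)) ha) (le_trans (le_max_right _ _) hn)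
  obtain ⟨i', f0, hf0, hf0'⟩ := hnz n hn1
  constructor
  · intro f hf
    obtain ⟨g, hg, rfl⟩ := theta_surj (hirr n hn1) hdk hf0 hf0' hf
    have hex : ∀ a : evens i, ∃ F ∈ Ek (ρ (n + 1)) k (i - a.1),
        slice (ι n) 0 F = opH (V n) n 0 a.1 g := fun a =>
      ((hgood (i - a.1)) n (hn2 a.1 a.2)).1 _ (lower_mem a.2 hg)
    choose F hF1 hF2 using hex
    refine ⟨∑ a : evens i, opH (V (n + 1)) (n + 1) a.1 0 (F a),
      Submodule.sum_mem _ fun a _ => raise_mem a.2 (hF1 a), ?_⟩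
    rw [map_sum, theta_apply, ← Finset.sum_coe_sort (evens i) (fun a => opH (V n) n a 0 (opH (V n) n 0 a g))]
    refine Finset.sum_congr rfl fun a _ => ?_
    rw [slice_raise (mem_evens.1 a.2).2.2, hF2]
  · have hfin : ∀ j, Module.Finite ℚ (Ek (ρ n) k j) := fun n => Ek_finite _ _ _
    let L : Ek (ρ n) (k + 1) i →ₗ[ℚ] (∀ a : evens i, Ek (ρ n) k (i - a.1)) :=
      LinearMap.pi fun a => (opH (V n) n 0 a.1).restrict (fun x hx => lower_mem a.2 hx)
    have hLi : Function.Injective L := by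
      refine (injective_iff_map_eq_zero L).2 fun x hx => Subtype.ext ?_
      refine kernel_vanish (hirr n hn1) hdk hf0 hf0' x.2 fun a ha => ?_
      exact congrArg Subtype.val (congrFun hx ⟨a, ha⟩)
    refine (LinearMap.finrank_le_finrank_of_injective hLi).trans ?_
    rw [Module.finrank_pi_fintype]
    exact Finset.sum_le_sum fun a _ => (hgood (i - a.1) n (hn2 a.1 a.2)).2

/-- All supports are eventually good, up to degree `i`. -/
lemma GoodK_all {N : ℕ} (hirr : ∀ n, N ≤ n → IsIrreducibleRep (ρ n))
    (hι0 : ∀ n, N ≤ n → ι n ≠ 0)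
    (hι : ∀ n, N ≤ n → ∀ w v, ι n (ρ n w v) = ρ (n + 1) (inclW n w) (ι n v)) (k i : ℕ) :
    ∃ N' B, GoodK ρ ι k i N' B := by
  classical
  let Q : ℕ → ℕ → Prop := fun n e => ∀ j < e, ∀ i, ∀ f ∈ Ek (ρ n) j i, f = 0
  have hQ : ∀ n m e, N ≤ n → n ≤ m → Q n e → Q m e := by
    intro n m e hn hm h
    induction m, hm using Nat.le_induction with
    | base => exact h
    | succ m hm ih =>
      exact mono_Z (hirr _ (by omega)) (hι0 m (by omega)) (hι m (by omega)) ih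
  by_cases hall : ∀ e, ∃ n, N ≤ n ∧ Q n e
  · obtain ⟨n, hn, hq⟩ := hall (k + 1)
    exact ⟨n, 0, GoodK_of_zero fun m hm => hQ n m _ hn hm hq k (by omega) i⟩
  · push Not at hall
    have hspec := Nat.find_spec hall
    have hmin := fun m => Nat.find_min hall (m := m)
    obtain ⟨d, hd⟩ : ∃ d, Nat.find hall = d + 1 := by
      refine Nat.exists_eq_succ_of_ne_zero fun h0 => ?_
      rw [h0] at hspec
      exact hspec N le_rfl (fun j hj => absurd hj (Nat.not_lt_zero j))
    rw [hd] at hspec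
    have hdm := hmin d (by omega)
    push Not at hdm
    obtain ⟨N1, hN1, hq1⟩ := hdm
    have hZ : ∀ n, N1 ≤ n → Q n d := fun n hn => hQ N1 n d hN1 hn hq1
    have hnz : ∀ n, N1 ≤ n → ∃ i, ∃ f ∈ Ek (ρ n) d i, f ≠ 0 := by
      intro n hn
      by_contra hcon
      push Not at hcon
      refine hspec n (by omega) fun j hj i f hf => ?_
      rcases Nat.lt_succ_iff_lt_or_eq.1 hj with h | h
      · exact hZ n hn j h i f hf
      · subst h; exact hcon i f hf
    have main : ∀ k i, ∃ N' B, GoodK ρ ι k i N' B := by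
      intro k
      induction k with
      | zero =>
        intro i
        by_cases h0 : d = 0
        · subst h0
          exact GoodK_base (fun n hn => hirr n (by omega)) (fun n hn => hι0 n (by omega))
            (fun n hn => hι n (by omega)) hZ i
        · exact ⟨N1, 0, GoodK_of_zero fun n hn => hZ n hn 0 (by omega) i⟩
      | succ k ih =>
        intro i
        rcases lt_trichotomy (k + 1) d with h | h | h
        · exact ⟨N1, 0, GoodK_of_zero fun n hn => hZ n hn _ h i⟩
        · subst h
          exact GoodK_base (fun n hn => hirr n (by omega)) (fun n hn => hι0 n (by omega))
            (fun n hn => hι n (by omega)) hZ i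
        · exact GoodK_step (fun n hn => hirr n (by omega)) hnz h ih i
    exact main k i

/-- Projection to the part with support of size `k`. -/
noncomputable def projK (V : Type*) [AddCommGroup V] [Module ℚ V] (n k : ℕ) :
    (V →ₗ[ℚ] ((Fin n → ℕ) → ℚ)) →ₗ[ℚ] (V →ₗ[ℚ] ((Fin n → ℕ) → ℚ)) where
  toFun f :=
    { toFun := fun v m => if suppC m = k then f v m else 0
      map_add' := fun v u => by funext m; simp only [map_add, Pi.add_apply]; split_ifs <;> simp
      map_smul' := fun c v => by
        funext m; simp only [map_smul, Pi.smul_apply, RingHom.id_apply]; split_ifs <;> simp }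
  map_add' f g := by
    refine LinearMap.ext fun v => funext fun m => ?_
    change (if suppC m = k then f v m + g v m else 0) =
      (if suppC m = k then f v m else 0) + (if suppC m = k then g v m else 0)
    split_ifs <;> simp
  map_smul' c f := by
    refine LinearMap.ext fun v => funext fun m => ?_
    change (if suppC m = k then c * f v m else 0) = c * (if suppC m = k then f v m else 0)
    split_ifs <;> simp

lemma projK_apply {U : Type*} [AddCommGroup U] [Module ℚ U] (n k : ℕ)
    (f : U →ₗ[ℚ] ((Fin n → ℕ) → ℚ)) (v : U) (m : Fin n → ℕ) :
    projK U n k f v m = if suppC m = k then f v m else 0 := rfl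

lemma suppC_comp {n : ℕ} (m : Fin n → ℕ) (σ : Equiv.Perm (Fin n)) : suppC (m ∘ σ) = suppC m := by
  unfold suppC
  rw [Finset.card_filter, Finset.card_filter]
  exact Equiv.sum_comp σ (fun j => if m j ≠ 0 then 1 else 0)

lemma projK_mem {U : Type*} [AddCommGroup U] [Module ℚ U] {n i : ℕ} (k : ℕ)
    {ρ : Representation ℚ (Wgroup n) U}
    {f : U →ₗ[ℚ] ((Fin n → ℕ) → ℚ)} (hf : f ∈ Etot ρ i) : projK U n k f ∈ Ek ρ k i := by
  refine mem_Ek.2 ⟨⟨fun w v m => ?_, fun v m h => ?_⟩, fun v m h => ?_⟩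
  · rw [projK_apply, projK_apply, suppC_comp, hf.1]
    split_ifs <;> simp
  · rw [projK_apply] at h
    exact hf.2 v m fun h0 => h (by simp [h0])
  · rw [projK_apply] at h
    by_contra h0
    simp [h0] at h

lemma sum_projK {U : Type*} [AddCommGroup U] [Module ℚ U] {n i : ℕ}
    {ρ : Representation ℚ (Wgroup n) U}
    {f : U →ₗ[ℚ] ((Fin n → ℕ) → ℚ)} (hf : f ∈ Etot ρ i) :
    ∑ k : Fin (i + 1), projK U n k f = f := by
  refine LinearMap.ext fun v => funext fun m => ?_
  rw [LinearMap.sum_apply, Finset.sum_apply]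
  simp only [projK_apply]
  by_cases h0 : f v m = 0
  · simp [h0]
  · have h1 := hf.2 v m h0
    have h2 := suppC_le m
    rw [Finset.sum_eq_single (⟨suppC m, by omega⟩ : Fin (i + 1))]
    · simp
    · intro b _ hb
      have : suppC m ≠ (b : ℕ) := fun h => hb (Fin.ext h.symm)
      simp [this]
    · simp

lemma Etot_good {N : ℕ} (hirr : ∀ n, N ≤ n → IsIrreducibleRep (ρ n))
    (hι0 : ∀ n, N ≤ n → ι n ≠ 0)
    (hι : ∀ n, N ≤ n → ∀ w v, ι n (ρ n w v) = ρ (n + 1) (inclW n w) (ι n v)) (i : ℕ) :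
    ∃ N' B, N ≤ N' ∧ ∀ n, N' ≤ n →
      (∀ f ∈ Etot (ρ n) i, ∃ F ∈ Etot (ρ (n + 1)) i, slice (ι n) 0 F = f) ∧
      Module.finrank ℚ (Etot (ρ n) i) ≤ B := by
  choose Nf Bf hgood using fun k : Fin (i + 1) => GoodK_all hirr hι0 hι k i
  refine ⟨max N (Finset.univ.sup Nf), ∑ k, Bf k, le_max_left _ _, fun n hn => ?_⟩
  have hn2 : ∀ k, Nf k ≤ n := fun k =>
    le_trans (Finset.le_sup (Finset.mem_univ k)) (le_trans (le_max_right _ _) hn)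
  constructor
  · intro f hf
    choose F hF1 hF2 using fun k : Fin (i + 1) =>
      (hgood k n (hn2 k)).1 _ (projK_mem (k : ℕ) hf)
    refine ⟨∑ k, F k, Submodule.sum_mem _ fun k _ => (hF1 k).1, ?_⟩
    rw [map_sum, Finset.sum_congr rfl fun k _ => hF2 k, sum_projK hf]
  · have hfin : ∀ k, Module.Finite ℚ (Ek (ρ n) k i) := fun k => Ek_finite _ _ _
    let L : Etot (ρ n) i →ₗ[ℚ] (∀ k : Fin (i + 1), Ek (ρ n) k i) :=
      LinearMap.pi fun k => (projK (V n) n k).restrict (fun x hx => projK_mem (k : ℕ) hx)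
    have hLi : Function.Injective L := by
      refine (injective_iff_map_eq_zero L).2 fun x hx => Subtype.ext ?_
      rw [← sum_projK x.2]
      exact Finset.sum_eq_zero fun k _ => congrArg Subtype.val (congrFun hx k)
    refine (LinearMap.finrank_le_finrank_of_injective hLi).trans ?_
    rw [Module.finrank_pi_fintype]
    exact Finset.sum_le_sum fun k _ => (hgood k n (hn2 k)).2

end Stab

section PolyLink

lemma homog_iff {n i : ℕ} {p : MvPolynomial (Fin n) ℚ} :
    p ∈ homogeneousSubmodule (Fin n) ℚ i ↔ ∀ d, coeff d p ≠ 0 → ∑ j, d j = i := by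
  rw [mem_homogeneousSubmodule]
  constructor
  · intro h d hd
    have := h hd
    rw [← this, Finsupp.weight_apply, Finsupp.sum_fintype]
    · simp
    · simp
  · intro h d hd
    rw [← h d hd, Finsupp.weight_apply, Finsupp.sum_fintype]
    · simp
    · simp

lemma wPolyRep_monomial {n : ℕ} (w : Wgroup n) (s : Fin n →₀ ℕ) (a : ℚ) :
    wPolyRep n w (monomial s a) = monomial (Finsupp.equivMapDomain w.right s)
      (a * sgnW w (Finsupp.equivMapDomain w.right s)) := by
  have hs : sgnW w (Finsupp.equivMapDomain w.right s) =
      ∏ j, (((w.left (w.right j) : ℤˣ) : ℤ) : ℚ) ^ s j := by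
    unfold sgnW
    rw [← Equiv.prod_comp w.right]
    simp
  have hx : ∏ j, (X j : MvPolynomial (Fin n) ℚ) ^ (Finsupp.equivMapDomain w.right s) j =
      ∏ j, X (w.right j) ^ s j := by
    rw [← Equiv.prod_comp w.right]
    simp
  show aeval (wVars n w) (monomial s a) = _
  rw [aeval_monomial, Finsupp.prod_fintype _ _ (by simp), monomial_eq,
    Finsupp.prod_fintype _ _ (by simp), hx, hs]
  simp only [wVars, mul_pow, Finset.prod_mul_distrib, algebraMap_eq, map_mul, map_prod, map_pow]
  ring

lemma coeff_wPolyRep {n : ℕ} (w : Wgroup n) (p : MvPolynomial (Fin n) ℚ) (d : Fin n →₀ ℕ) :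
    coeff d (wPolyRep n w p) =
      sgnW w d * coeff (Finsupp.equivMapDomain w.right.symm d) p := by
  classical
  induction p using MvPolynomial.induction_on' with
  | monomial s a =>
    rw [wPolyRep_monomial, coeff_monomial, coeff_monomial]
    by_cases h : Finsupp.equivMapDomain w.right s = d
    · have h2 : s = Finsupp.equivMapDomain w.right.symm d := by
        rw [← h]; ext j; simp
      rw [if_pos h, if_pos h2, h, mul_comm]
    · have h2 : s ≠ Finsupp.equivMapDomain w.right.symm d := by
        rintro rfl; exact h (by ext j; simp)
      rw [if_neg h, if_neg h2, mul_zero]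
  | add p q hp hq => rw [map_add, coeff_add, coeff_add, hp, hq]; ring

lemma sum_equivMapDomain {n : ℕ} (σ : Equiv.Perm (Fin n)) (d : Fin n →₀ ℕ) :
    ∑ j, (Finsupp.equivMapDomain σ d) j = ∑ j, d j := by
  simp only [Finsupp.equivMapDomain_apply]
  exact Equiv.sum_comp σ.symm (fun j => d j)

lemma wPolyRep_homog {n i : ℕ} (w : Wgroup n) {p : MvPolynomial (Fin n) ℚ}
    (hp : p ∈ homogeneousSubmodule (Fin n) ℚ i) :
    wPolyRep n w p ∈ homogeneousSubmodule (Fin n) ℚ i := by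
  rw [homog_iff] at hp ⊢
  intro d hd
  rw [coeff_wPolyRep] at hd
  rw [← hp _ (right_ne_zero_of_mul hd), sum_equivMapDomain]

/-- Extend an exponent vector by zero. -/
noncomputable def snocZ {n : ℕ} (d : Fin n →₀ ℕ) : Fin (n + 1) →₀ ℕ :=
  Finsupp.equivFunOnFinite.symm (Fin.snoc d 0)

lemma snocZ_coe {n : ℕ} (d : Fin n →₀ ℕ) :
    (⇑(snocZ d) : Fin (n + 1) → ℕ) = Fin.snoc (α := fun _ => ℕ) d 0 := rfl

lemma setLast_castSucc (n : ℕ) (j : Fin n) : setLastToZero n (X j.castSucc) = X j := by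
  simp [setLastToZero]

lemma setLast_last (n : ℕ) : setLastToZero n (X (Fin.last n)) = 0 := by
  simp [setLastToZero]

lemma coeff_setLast {n : ℕ} (p : MvPolynomial (Fin (n + 1)) ℚ) (d : Fin n →₀ ℕ) :
    coeff d (setLastToZero n p) = coeff (snocZ d) p := by
  classical
  induction p using MvPolynomial.induction_on' with
  | monomial s a =>
    have hm : setLastToZero n (monomial s a) =
        C a * ((∏ j : Fin n, X j ^ s j.castSucc) * 0 ^ s (Fin.last n)) := by
      rw [monomial_eq, Finsupp.prod_fintype _ _ (by simp), Fin.prod_univ_castSucc, map_mul,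
        map_mul, map_prod]
      simp only [map_pow, setLast_castSucc, setLast_last]
      congr 1
      exact (setLastToZero n).commutes a
    by_cases h0 : s (Fin.last n) = 0
    · have h1 : setLastToZero n (monomial s a) =
          monomial (Finsupp.equivFunOnFinite.symm fun j : Fin n => s j.castSucc) a := by
        rw [hm, h0, pow_zero, mul_one, monomial_eq, Finsupp.prod_fintype _ _ (by simp)]
        simp
      rw [h1, coeff_monomial, coeff_monomial]
      congr 1
      apply propext
      constructor
      · rintro rfl
        ext j
        refine Fin.lastCases ?_ (fun j => ?_) j
        · simp [snocZ, h0]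
        · simp [snocZ]
      · rintro rfl
        ext j
        simp [snocZ]
    · rw [hm, zero_pow h0, mul_zero, mul_zero, coeff_zero, coeff_monomial, if_neg]
      rintro rfl
      exact h0 (by simp [snocZ])
  | add p q hp hq => rw [map_add, coeff_add, coeff_add, hp, hq]

lemma setLast_homog {n i : ℕ} {p : MvPolynomial (Fin (n + 1)) ℚ}
    (hp : p ∈ homogeneousSubmodule (Fin (n + 1)) ℚ i) :
    setLastToZero n p ∈ homogeneousSubmodule (Fin n) ℚ i := by
  rw [homog_iff] at hp ⊢
  intro d hd
  rw [coeff_setLast] at hd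
  rw [← hp _ hd, Fin.sum_univ_castSucc]
  simp [snocZ]

lemma setLast_equiv {n : ℕ} (w : Wgroup n) (p : MvPolynomial (Fin (n + 1)) ℚ) :
    setLastToZero n (wPolyRep (n + 1) (inclW n w) p) = wPolyRep n w (setLastToZero n p) := by
  ext d
  rw [coeff_setLast, coeff_wPolyRep, coeff_wPolyRep, coeff_setLast, snocZ_coe]
  congr 1
  · exact sgnW_incl _ _ _
  · congr 1
    apply DFunLike.coe_injective
    have := snoc_comp_incl w d 0
    exact this

/-- The degree `i` polynomial with given coefficient function. -/
noncomputable def toPoly (n i : ℕ) : ((Fin n → ℕ) → ℚ) →ₗ[ℚ] MvPolynomial (Fin n) ℚ where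
  toFun p := ∑ d ∈ Finset.finsuppAntidiag (Finset.univ : Finset (Fin n)) i, monomial d (p d)
  map_add' p q := by simp [Finset.sum_add_distrib]
  map_smul' r p := by simp [Finset.smul_sum, smul_monomial]

lemma coeff_toPoly {n i : ℕ} (p : (Fin n → ℕ) → ℚ) (d : Fin n →₀ ℕ) :
    coeff d (toPoly n i p) = if ∑ j, d j = i then p d else 0 := by
  classical
  show coeff d (∑ d ∈ Finset.finsuppAntidiag (Finset.univ : Finset (Fin n)) i, monomial d (p d)) = _
  rw [coeff_sum]
  simp only [coeff_monomial, Finset.sum_ite_eq', Finset.mem_finsuppAntidiag]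
  simp

lemma toPoly_homog {n i : ℕ} (p : (Fin n → ℕ) → ℚ) :
    toPoly n i p ∈ homogeneousSubmodule (Fin n) ℚ i := by
  rw [homog_iff]
  intro d hd
  rw [coeff_toPoly] at hd
  by_contra h
  exact hd (if_neg h)

end PolyLink

section CondIII

set_option maxSynthPendingDepth 3

variable {n i : ℕ} {V : Type*} [AddCommGroup V] [Module ℚ V]

lemma mkQ_mem_grade {p : MvPolynomial (Fin n) ℚ} (hp : p ∈ homogeneousSubmodule (Fin n) ℚ i) :
    ((wSymIdeal n).restrictScalars ℚ).mkQ p ∈ wCoinvGrade n i :=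
  Submodule.mem_map_of_mem hp

/-- The class of a degree `i` coefficient function in the coinvariant algebra. -/
noncomputable def toGr (n i : ℕ) : ((Fin n → ℕ) → ℚ) →ₗ[ℚ] wCoinvGrade n i :=
  LinearMap.codRestrict _ (((wSymIdeal n).restrictScalars ℚ).mkQ ∘ₗ toPoly n i)
    fun p => mkQ_mem_grade (toPoly_homog p)

lemma toGr_coe (p : (Fin n → ℕ) → ℚ) :
    (toGr n i p : WCoinv n) = ((wSymIdeal n).restrictScalars ℚ).mkQ (toPoly n i p) := rfl

lemma toPoly_equiv {ρ : Representation ℚ (Wgroup n) V} {F : V →ₗ[ℚ] ((Fin n → ℕ) → ℚ)}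
    (hF : F ∈ Etot ρ i) (w : Wgroup n) (v : V) :
    toPoly n i (F (ρ w v)) = wPolyRep n w (toPoly n i (F v)) := by
  ext d
  rw [coeff_toPoly, coeff_wPolyRep, coeff_toPoly, sum_equivMapDomain, hF.1]
  split_ifs
  · rfl
  · simp

/-- Compatibility of the action on the graded piece with the one on polynomials. -/
def CompatRho (ρgr : Representation ℚ (Wgroup n) (wCoinvGrade n i)) : Prop :=
  ∀ (w : Wgroup n) (x : wCoinvGrade n i) (p : MvPolynomial (Fin n) ℚ),
    (x : WCoinv n) = ((wSymIdeal n).restrictScalars ℚ).mkQ p →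
    (ρgr w x : WCoinv n) = ((wSymIdeal n).restrictScalars ℚ).mkQ (wPolyRep n w p)

lemma toGr_mem {ρ : Representation ℚ (Wgroup n) V}
    {ρgr : Representation ℚ (Wgroup n) (wCoinvGrade n i)} (hc : CompatRho ρgr)
    {F : V →ₗ[ℚ] ((Fin n → ℕ) → ℚ)} (hF : F ∈ Etot ρ i) :
    toGr n i ∘ₗ F ∈ RepHom ρ ρgr := by
  intro w v
  apply Subtype.ext
  rw [hc w _ (toPoly n i (F v)) rfl]
  rw [LinearMap.comp_apply, toGr_coe, toPoly_equiv hF]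

/-- Coefficients of a polynomial as a function. -/
noncomputable def coeffFun (n : ℕ) : MvPolynomial (Fin n) ℚ →ₗ[ℚ] ((Fin n → ℕ) → ℚ) where
  toFun p m := coeff (Finsupp.equivFunOnFinite.symm m) p
  map_add' p q := by funext m; simp
  map_smul' r p := by funext m; simp

lemma toPoly_coeffFun {p : MvPolynomial (Fin n) ℚ} (hp : p ∈ homogeneousSubmodule (Fin n) ℚ i) :
    toPoly n i (coeffFun n p) = p := by
  ext d
  rw [coeff_toPoly]
  have h1 : coeffFun n p d = coeff d p := by
    show coeff _ p = _
    simp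
  rw [h1]
  split_ifs with h
  · rfl
  · by_contra h2
    exact h (homog_iff.1 hp d (Ne.symm h2))

lemma toGr_surj {ρ : Representation ℚ (Wgroup n) V}
    {ρgr : Representation ℚ (Wgroup n) (wCoinvGrade n i)} (hc : CompatRho ρgr)
    {h : V →ₗ[ℚ] wCoinvGrade n i} (hh : h ∈ RepHom ρ ρgr) :
    ∃ F ∈ Etot ρ i, toGr n i ∘ₗ F = h := by
  have := Wgroup_finite n
  have : Fintype (Wgroup n) := Fintype.ofFinite _
  let P : homogeneousSubmodule (Fin n) ℚ i →ₗ[ℚ] wCoinvGrade n i :=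
    LinearMap.codRestrict _ (((wSymIdeal n).restrictScalars ℚ).mkQ ∘ₗ Submodule.subtype _)
      fun p => mkQ_mem_grade p.2
  have hP : LinearMap.range P = ⊤ := by
    rw [LinearMap.range_eq_top]
    rintro ⟨_, p, hp, rfl⟩
    exact ⟨⟨p, hp⟩, rfl⟩
  obtain ⟨s, hs⟩ := LinearMap.exists_rightInverse_of_surjective P hP
  let h0 : V →ₗ[ℚ] MvPolynomial (Fin n) ℚ := Submodule.subtype _ ∘ₗ s ∘ₗ h
  have h0h : ∀ v, h0 v ∈ homogeneousSubmodule (Fin n) ℚ i := fun v => (s (h v)).2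
  have h0q : ∀ v, ((wSymIdeal n).restrictScalars ℚ).mkQ (h0 v) = (h v : WCoinv n) := fun v =>
    congrArg Subtype.val (LinearMap.congr_fun hs (h v))
  let f : V →ₗ[ℚ] MvPolynomial (Fin n) ℚ :=
    ((Fintype.card (Wgroup n) : ℚ)⁻¹) • ∑ w : Wgroup n, wPolyRep n w ∘ₗ h0 ∘ₗ ρ w⁻¹
  have hf : ∀ v, f v = ((Fintype.card (Wgroup n) : ℚ)⁻¹) •
      ∑ w : Wgroup n, wPolyRep n w (h0 (ρ w⁻¹ v)) := fun v => by
    simp [f, LinearMap.sum_apply]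
  have hfh : ∀ v, f v ∈ homogeneousSubmodule (Fin n) ℚ i := fun v => by
    rw [hf]
    exact Submodule.smul_mem _ _ (Submodule.sum_mem _ fun w _ => wPolyRep_homog w (h0h _))
  have hfe : ∀ w v, f (ρ w v) = wPolyRep n w (f v) := fun w v => by
    rw [hf, hf, map_smul, map_sum]
    congr 1
    rw [← Equiv.sum_comp (Equiv.mulLeft w)]
    refine Finset.sum_congr rfl fun u _ => ?_
    rw [Equiv.coe_mulLeft, mul_inv_rev, map_mul, map_mul, Module.End.mul_apply,
      Module.End.mul_apply, ← Module.End.mul_apply (ρ w⁻¹), ← map_mul]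
    simp
  have hfq : ∀ v, ((wSymIdeal n).restrictScalars ℚ).mkQ (f v) = (h v : WCoinv n) := fun v => by
    have h1 : ∀ w : Wgroup n, ((wSymIdeal n).restrictScalars ℚ).mkQ
        (wPolyRep n w (h0 (ρ w⁻¹ v))) = (h v : WCoinv n) := fun w => by
      rw [← hc w (h (ρ w⁻¹ v)) _ (h0q _).symm, ← hh, ← Module.End.mul_apply, ← map_mul]
      simp
    rw [hf, map_smul, map_sum, Finset.sum_congr rfl fun w _ => h1 w, Finset.sum_const,
      Finset.card_univ, ← Nat.cast_smul_eq_nsmul ℚ, smul_smul, inv_mul_cancel₀, one_smul]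
    exact Nat.cast_ne_zero.2 Fintype.card_ne_zero
  refine ⟨coeffFun n ∘ₗ f, ⟨fun w v m => ?_, fun v m hm => ?_⟩, ?_⟩
  · show coeff _ (f (ρ w v)) = _ * coeff _ (f v)
    have he : Finsupp.equivMapDomain w.right.symm (Finsupp.equivFunOnFinite.symm m) =
        Finsupp.equivFunOnFinite.symm (m ∘ w.right) := by
      ext j
      rfl
    rw [hfe, coeff_wPolyRep, he]
    rfl
  · exact homog_iff.1 (hfh v) _ hm
  · ext v
    show ((wSymIdeal n).restrictScalars ℚ).mkQ (toPoly n i (coeffFun n (f v))) = _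
    rw [toPoly_coeffFun (hfh v), hfq]

/-- The linear map `Etot → RepHom`. -/
noncomputable def toGrHom {ρ : Representation ℚ (Wgroup n) V}
    {ρgr : Representation ℚ (Wgroup n) (wCoinvGrade n i)} (hc : CompatRho ρgr) :
    Etot ρ i →ₗ[ℚ] RepHom ρ ρgr where
  toFun F := ⟨toGr n i ∘ₗ F.1, toGr_mem hc F.2⟩
  map_add' F G := by ext v; simp
  map_smul' r F := by ext v; simp

lemma toGrHom_surj {ρ : Representation ℚ (Wgroup n) V}
    {ρgr : Representation ℚ (Wgroup n) (wCoinvGrade n i)} (hc : CompatRho ρgr) :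
    Function.Surjective (toGrHom (ρ := ρ) hc) := by
  rintro ⟨h, hh⟩
  obtain ⟨F, hF, hq⟩ := toGr_surj hc hh
  exact ⟨⟨F, hF⟩, Subtype.ext hq⟩

lemma setLast_toPoly (p : (Fin (n + 1) → ℕ) → ℚ) :
    setLastToZero n (toPoly (n + 1) i p) =
      toPoly n i (fun m => p (Fin.snoc (α := fun _ => ℕ) m 0)) := by
  ext d
  rw [coeff_setLast, coeff_toPoly, coeff_toPoly, Fin.sum_univ_castSucc]
  simp [snocZ]

/-- Compatibility of the reversed map with the one on polynomials. -/
def CompatPsi (ψgr : wCoinvGrade (n + 1) i →ₗ[ℚ] wCoinvGrade n i) : Prop :=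
  ∀ (x : wCoinvGrade (n + 1) i) (p : MvPolynomial (Fin (n + 1)) ℚ),
    (x : WCoinv (n + 1)) = ((wSymIdeal (n + 1)).restrictScalars ℚ).mkQ p →
    (ψgr x : WCoinv n) = ((wSymIdeal n).restrictScalars ℚ).mkQ (setLastToZero n p)

lemma grade_lift (x : wCoinvGrade n i) : ∃ p ∈ homogeneousSubmodule (Fin n) ℚ i,
    (x : WCoinv n) = ((wSymIdeal n).restrictScalars ℚ).mkQ p := by
  obtain ⟨_, p, hp, rfl⟩ := x
  exact ⟨p, hp, rfl⟩

lemma compat_consistent {ρgr : Representation ℚ (Wgroup n) (wCoinvGrade n i)}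
    {ρgr' : Representation ℚ (Wgroup (n + 1)) (wCoinvGrade (n + 1) i)}
    {ψgr : wCoinvGrade (n + 1) i →ₗ[ℚ] wCoinvGrade n i}
    (hc : CompatRho ρgr) (hc' : CompatRho ρgr') (hp : CompatPsi ψgr) (w : Wgroup n)
    (x : wCoinvGrade (n + 1) i) : ψgr (ρgr' (inclW n w) x) = ρgr w (ψgr x) := by
  obtain ⟨p, -, hx⟩ := grade_lift x
  apply Subtype.ext
  rw [hp _ _ (hc' _ _ _ hx), hc _ _ _ (hp _ _ hx), setLast_equiv]

lemma psi_toGr {ψgr : wCoinvGrade (n + 1) i →ₗ[ℚ] wCoinvGrade n i} (hp : CompatPsi ψgr)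
    (p : (Fin (n + 1) → ℕ) → ℚ) :
    ψgr (toGr (n + 1) i p) = toGr n i (fun m => p (Fin.snoc (α := fun _ => ℕ) m 0)) := by
  apply Subtype.ext
  rw [hp _ _ (toGr_coe p), setLast_toPoly, toGr_coe]

lemma mult_stable {V : ℕ → Type*} [∀ n, AddCommGroup (V n)] [∀ n, Module ℚ (V n)]
    [∀ n, Module.Finite ℚ (V n)] {ρ : ∀ n, Representation ℚ (Wgroup n) (V n)}
    {ι : ∀ n, V n →ₗ[ℚ] V (n + 1)} {N : ℕ} (hirr : ∀ n, N ≤ n → IsIrreducibleRep (ρ n))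
    (hι0 : ∀ n, N ≤ n → ι n ≠ 0)
    (hι : ∀ n, N ≤ n → ∀ w v, ι n (ρ n w v) = ρ (n + 1) (inclW n w) (ι n v)) (i : ℕ)
    {ρgr : ∀ n, Representation ℚ (Wgroup n) (wCoinvGrade n i)}
    {ψgr : ∀ n, wCoinvGrade (n + 1) i →ₗ[ℚ] wCoinvGrade n i}
    (hc : ∀ n, CompatRho (ρgr n)) (hp : ∀ n, CompatPsi (ψgr n)) :
    ∃ N', N ≤ N' ∧ ∀ n, N' ≤ n → repMult (ρ n) (ρgr n) = repMult (ρ N') (ρgr N') := by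
  obtain ⟨N', B, hN', hgood⟩ := Etot_good hirr hι0 hι i
  have hfinE : ∀ n, Module.Finite ℚ (Etot (ρ n) i) := fun n => Etot_finite _ _
  have hfin : ∀ n, Module.Finite ℚ (RepHom (ρ n) (ρgr n)) := fun n =>
    Module.Finite.of_surjective _ (toGrHom_surj (ρ := ρ n) (hc n))
  have hmono : ∀ n, N' ≤ n → repMult (ρ n) (ρgr n) ≤ repMult (ρ (n + 1)) (ρgr (n + 1)) := by
    intro n hn
    let L : RepHom (ρ (n + 1)) (ρgr (n + 1)) →ₗ[ℚ] RepHom (ρ n) (ρgr n) :=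
      { toFun := fun h => ⟨ψgr n ∘ₗ h.1 ∘ₗ ι n, fun w v => by
          simp only [LinearMap.comp_apply]
          rw [hι n (hN'.trans hn), h.2, compat_consistent (hc n) (hc (n + 1)) (hp n)]⟩
        map_add' := fun a b => by ext v; simp
        map_smul' := fun a b => by ext v; simp }
    refine LinearMap.finrank_le_finrank_of_surjective (f := L) ?_
    rintro ⟨h, hh⟩
    obtain ⟨F, hF, rfl⟩ := toGr_surj (hc n) hh
    obtain ⟨F', hF', rfl⟩ := (hgood n hn).1 F hF
    refine ⟨⟨toGr (n + 1) i ∘ₗ F', toGr_mem (hc (n + 1)) hF'⟩, Subtype.ext ?_⟩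
    apply LinearMap.ext
    intro v
    exact psi_toGr (hp n) _
  have hbd : ∀ n, N' ≤ n → repMult (ρ n) (ρgr n) ≤ B := fun n hn =>
    (LinearMap.finrank_le_finrank_of_surjective
      (toGrHom_surj (ρ := ρ n) (hc n))).trans (hgood n hn).2
  obtain ⟨Ntwo, h1, h2⟩ :=
    monotone_eventually_const (fun n => repMult (ρ n) (ρgr n)) N' B hmono hbd
  exact ⟨Ntwo, hN'.trans h1, h2⟩

end CondIII

section RootsOfUnity

/-- The ideal of polynomials all of whose monomials have degree at least `M`. -/
noncomputable def bigIdeal (k M : ℕ) : Ideal (MvPolynomial (Fin k) ℂ) where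
  carrier := {P | ∀ d, coeff d P ≠ 0 → M ≤ ∑ j, d j}
  add_mem' := by
    intro P Q hP hQ d hd
    by_cases h1 : coeff d P = 0
    · exact hQ d fun h2 => hd (by rw [coeff_add, h1, h2, add_zero])
    · exact hP d h1
  zero_mem' := fun d hd => by simp at hd
  smul_mem' := by
    classical
    intro P Q hQ d hd
    rw [smul_eq_mul, coeff_mul] at hd
    obtain ⟨x, hx, hne⟩ := Finset.exists_ne_zero_of_sum_ne_zero hd
    have h1 := hQ _ (right_ne_zero_of_mul hne)
    rw [← Finset.HasAntidiagonal.mem_antidiagonal.1 hx]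
    simp only [Finsupp.add_apply, Finset.sum_add_distrib]
    omega

lemma mem_bigIdeal {k M : ℕ} {P : MvPolynomial (Fin k) ℂ} :
    P ∈ bigIdeal k M ↔ ∀ d, coeff d P ≠ 0 → M ≤ ∑ j, d j := Iff.rfl

/-- Multiply one variable by `z`. -/
noncomputable def twistVar {k : ℕ} (z : ℂ) (j : Fin k) :
    MvPolynomial (Fin k) ℂ →ₐ[ℂ] MvPolynomial (Fin k) ℂ :=
  aeval (fun l => C (if l = j then z else 1) * X l)

lemma coeff_twistVar {k : ℕ} (z : ℂ) (j : Fin k) (P : MvPolynomial (Fin k) ℂ)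
    (d : Fin k →₀ ℕ) : coeff d (twistVar z j P) = z ^ d j * coeff d P := by
  classical
  induction P using MvPolynomial.induction_on' with
  | monomial s a =>
    have h : twistVar z j (monomial s a) = monomial s (a * z ^ s j) := by
      unfold twistVar
      rw [aeval_monomial, Finsupp.prod_fintype _ _ (by simp), monomial_eq,
        Finsupp.prod_fintype _ _ (by simp)]
      simp only [mul_pow, Finset.prod_mul_distrib, algebraMap_eq, map_mul, ← map_pow, ← map_prod,
        ite_pow, one_pow, Finset.prod_ite_eq', Finset.mem_univ, if_true]
      ring
    rw [h, coeff_monomial, coeff_monomial]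
    split_ifs with h1
    · rw [h1, mul_comm]
    · simp
  | add p q hp hq => rw [map_add, coeff_add, coeff_add, hp, hq]; ring

variable {n k M : ℕ}

/-- Substitute the orbits of the roots of unity. -/
noncomputable def rootSub (e : Fin k × Fin M ↪ Fin n) (z : ℂ) :
    MvPolynomial (Fin n) ℚ →ₐ[ℚ] MvPolynomial (Fin k) ℂ :=
  aeval (Function.extend e (fun js => C (z ^ (js.2 : ℕ)) * X js.1) 0)

lemma rootSub_mem (e : Fin k × Fin M ↪ Fin n) (z : ℂ) (js : Fin k × Fin M) :
    rootSub e z (X (e js)) = C (z ^ (js.2 : ℕ)) * X js.1 := by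
  unfold rootSub
  rw [aeval_X, e.injective.extend_apply]

lemma rootSub_notMem (e : Fin k × Fin M ↪ Fin n) (z : ℂ) {x : Fin n} (hx : x ∉ Set.range e) :
    rootSub e z (X x) = 0 := by
  unfold rootSub
  rw [aeval_X, Function.extend_apply']
  · rfl
  · exact hx

/-- Rotate one of the cycles. -/
noncomputable def rotPerm [NeZero M] (e : Fin k × Fin M ↪ Fin n) (j : Fin k) :
    Equiv.Perm (Fin n) :=
  Equiv.Perm.viaEmbedding
    (Equiv.prodCongrRight (fun l => if l = j then Equiv.addRight (1 : Fin M) else 1)) e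

lemma wPolyRep_perm (σ : Equiv.Perm (Fin n)) (p : MvPolynomial (Fin n) ℚ) :
    wPolyRep n ⟨1, σ⟩ p = rename σ p := by
  show aeval (wVars n ⟨1, σ⟩) p = _
  rw [rename_eq_aeval]
  congr 1
  apply congrArg
  funext j
  simp [wVars]

lemma rootSub_rot [NeZero M] (e : Fin k × Fin M ↪ Fin n) {z : ℂ} (hz : z ^ M = 1) (j : Fin k)
    (p : MvPolynomial (Fin n) ℚ) :
    rootSub e z (rename (rotPerm e j) p) = twistVar z j (rootSub e z p) := by
  have h : (rootSub e z).comp (rename (rotPerm e j)) =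
      ((twistVar z j).restrictScalars ℚ).comp (rootSub e z) := by
    apply MvPolynomial.algHom_ext
    intro x
    simp only [AlgHom.comp_apply, rename_X, AlgHom.restrictScalars_apply]
    by_cases hx : x ∈ Set.range e
    · obtain ⟨⟨l, s⟩, rfl⟩ := hx
      unfold rotPerm
      rw [Equiv.Perm.viaEmbedding_apply, rootSub_mem, rootSub_mem]
      by_cases hl : l = j
      · have h1 : z ^ ((s + 1 : Fin M) : ℕ) = z ^ (s : ℕ) * z := by
          rw [Fin.val_add, ← pow_eq_pow_mod _ hz]
          rcases Nat.lt_or_ge 1 M with h1 | h1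
          · have : ((1 : Fin M) : ℕ) = 1 := by
              rw [Fin.val_one', Nat.mod_eq_of_lt h1]
            rw [this, pow_succ]
          · have h2 : M = 1 := le_antisymm h1 (Nat.pos_of_neZero M)
            subst h2
            rw [pow_one] at hz
            simp [hz]
        simp [hl, h1, twistVar]
        ring
      · simp [hl, twistVar]
    · unfold rotPerm
      rw [Equiv.Perm.viaEmbedding_apply_of_notMem _ _ _ hx, rootSub_notMem e z hx, map_zero]
  exact DFunLike.congr_fun h p

lemma rootSub_const (e : Fin k × Fin M ↪ Fin n) (z : ℂ) (p : MvPolynomial (Fin n) ℚ) :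
    constantCoeff (rootSub e z p) = algebraMap ℚ ℂ (constantCoeff p) := by
  have h : (constantCoeff (R := ℂ) (σ := Fin k)).comp (rootSub e z).toRingHom =
      (algebraMap ℚ ℂ).comp constantCoeff := by
    apply MvPolynomial.ringHom_ext
    · intro r
      exact DFunLike.congr_fun (Subsingleton.elim (α := ℚ →+* ℂ) (((constantCoeff (R := ℂ) (σ := Fin k)).comp
        (rootSub e z).toRingHom).comp C) (((algebraMap ℚ ℂ).comp constantCoeff).comp C)) r
    · intro x
      show constantCoeff (rootSub e z (X x)) = algebraMap ℚ ℂ (constantCoeff (X x))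
      by_cases hx : x ∈ Set.range e
      · obtain ⟨js, rfl⟩ := hx
        rw [rootSub_mem]; simp
      · rw [rootSub_notMem e z hx]; simp
  exact DFunLike.congr_fun h p

lemma wSymIdeal_le [NeZero M] (e : Fin k × Fin M ↪ Fin n) {z : ℂ} (hz : IsPrimitiveRoot z M) :
    wSymIdeal n ≤ (bigIdeal k M).comap (rootSub e z) := by
  refine Ideal.span_le.2 ?_
  rintro q ⟨hq, hq0⟩
  show rootSub e z q ∈ bigIdeal k M
  rw [mem_bigIdeal]
  intro d hd
  have hdvd : ∀ j, M ∣ d j := by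
    intro j
    have h1 : twistVar z j (rootSub e z q) = rootSub e z q := by
      rw [← rootSub_rot e hz.pow_eq_one, ← wPolyRep_perm, hq]
    have h2 := congrArg (coeff d) h1
    rw [coeff_twistVar] at h2
    exact hz.dvd_of_pow_eq_one _ (mul_right_cancel₀ hd (by rw [h2, one_mul]))
  have hne : d ≠ 0 := by
    rintro rfl
    apply hd
    have := rootSub_const e z q
    rw [hq0, map_zero] at this
    exact this
  obtain ⟨j, hj⟩ := Finsupp.ne_iff.1 hne
  exact (Nat.le_of_dvd (Nat.pos_of_ne_zero hj) (hdvd j)).trans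
    (Finset.single_le_sum (f := fun j => d j) (fun _ _ => Nat.zero_le _) (Finset.mem_univ j))

lemma rename_inj_of_small {i : ℕ} (e : Fin k × Fin (i + 1) ↪ Fin n)
    {p : MvPolynomial (Fin k) ℚ} (hp : p ∈ homogeneousSubmodule (Fin k) ℚ i)
    (hmem : rename (fun j => e (j, 0)) p ∈ wSymIdeal n) : p = 0 := by
  have hz := Complex.isPrimitiveRoot_exp (i + 1) (by omega)
  have h1 := wSymIdeal_le e hz hmem
  rw [Ideal.mem_comap] at h1
  have h2 : ∀ z, rootSub e z (rename (fun j => e (j, 0)) p) = map (algebraMap ℚ ℂ) p := by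
    intro z
    have h : (rootSub e z).comp (rename (fun j => e (j, 0))) =
        (mapAlgHom (Algebra.ofId ℚ ℂ)) := by
      apply MvPolynomial.algHom_ext
      intro x
      rw [AlgHom.comp_apply, rename_X, rootSub_mem]
      simp
    exact DFunLike.congr_fun h p
  rw [h2, mem_bigIdeal] at h1
  ext d
  by_contra hd
  rw [coeff_zero] at hd
  have h3 := h1 d (by
    rw [coeff_map]
    exact (map_ne_zero _).2 hd)
  have h4 := homog_iff.1 hp d hd
  omega

end RootsOfUnity

section CondII

lemma setLast_rename {n : ℕ} {α : Type*} (g : α → Fin n) (p : MvPolynomial α ℚ) :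
    setLastToZero n (rename (fun x => (g x).castSucc) p) = rename g p := by
  have h : (setLastToZero n).comp (rename (fun x => (g x).castSucc)) = rename g := by
    apply MvPolynomial.algHom_ext
    intro x
    rw [AlgHom.comp_apply, rename_X, rename_X, setLast_castSucc]
  exact DFunLike.congr_fun h p

lemma psi_surj {n i : ℕ} {ψgr : wCoinvGrade (n + 1) i →ₗ[ℚ] wCoinvGrade n i}
    (hp : CompatPsi ψgr) : Function.Surjective ψgr := by
  intro x
  obtain ⟨p, hph, hx⟩ := grade_lift x
  have hr : rename (fun x : Fin n => (id x).castSucc) p ∈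
      homogeneousSubmodule (Fin (n + 1)) ℚ i :=
    IsHomogeneous.rename_isHomogeneous hph
  refine ⟨⟨_, mkQ_mem_grade hr⟩, Subtype.ext ?_⟩
  rw [hp _ _ rfl, setLast_rename, hx, rename_id, AlgHom.id_apply]

/-- Every monomial of degree `i` can be moved into any set of `k ≥ i` variables. -/
lemma monomial_move {n k i : ℕ} (hk : i ≤ k) (e : Fin k ↪ Fin n) (d : Fin n →₀ ℕ)
    (hd : ∑ j, d j = i) (a : ℚ) :
    ∃ (w : Wgroup n), ∃ p ∈ homogeneousSubmodule (Fin k) ℚ i,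
      monomial d a = wPolyRep n w (rename e p) := by
  classical
  have hcard : d.support.card ≤ k := by
    refine le_trans ?_ hk
    rw [← hd, Finset.card_eq_sum_ones]
    refine le_trans (Finset.sum_le_sum (g := fun j => d j) fun j hj => ?_)
      (Finset.sum_le_sum_of_subset (Finset.subset_univ _))
    exact Nat.one_le_iff_ne_zero.2 (Finsupp.mem_support_iff.1 hj)
  obtain ⟨g⟩ : Nonempty (d.support ↪ Fin k) :=
    Function.Embedding.nonempty_of_card_le (by rw [Fintype.card_coe, Fintype.card_fin]; exact hcard)
  let E : {x // x ∈ d.support} ≃ {x // x ∈ Set.range (fun y => e (g y))} :=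
    Equiv.ofInjective (fun y => e (g y)) (e.injective.comp g.injective)
  let σ : Equiv.Perm (Fin n) := E.extendSubtype
  have hσ : ∀ x ∈ d.support, σ x ∈ Set.range e := fun x hx => by
    have h1 : σ x = E ⟨x, hx⟩ := Equiv.extendSubtype_apply_of_mem E x hx
    rw [h1]
    exact ⟨g ⟨x, hx⟩, rfl⟩
  have hsupp : ↑(Finsupp.equivMapDomain σ d).support ⊆ Set.range e := by
    intro y hy
    rw [Finset.mem_coe, Finsupp.mem_support_iff, Finsupp.equivMapDomain_apply] at hy
    have := hσ _ (Finsupp.mem_support_iff.2 hy)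
    rwa [Equiv.apply_symm_apply] at this
  have h2 : wPolyRep n ⟨1, σ⟩ (monomial d a) = rename e (monomial
      (Finsupp.comapDomain e (Finsupp.equivMapDomain σ d) e.injective.injOn) a) := by
    rw [wPolyRep_perm, rename_monomial, rename_monomial,
      Finsupp.mapDomain_comapDomain _ e.injective _ hsupp, Finsupp.equivMapDomain_eq_mapDomain]
  refine ⟨(⟨1, σ⟩ : Wgroup n)⁻¹, monomial
    (Finsupp.comapDomain e (Finsupp.equivMapDomain σ d) e.injective.injOn) a, ?_, ?_⟩
  rotate_left
  · rw [← h2, ← Module.End.mul_apply, ← map_mul]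
    simp
  · rw [mem_homogeneousSubmodule, ← IsHomogeneous.rename_isHomogeneous_iff e.injective, ← h2,
      ← mem_homogeneousSubmodule]
    apply wPolyRep_homog
    rw [homog_iff]
    intro d' hd'
    rw [coeff_monomial] at hd'
    split_ifs at hd' with h
    · rw [← h, hd]
    · exact absurd rfl hd'

lemma cond_two {n i : ℕ} (hn : (i + 1) * (i + 1) ≤ n)
    {ρgr : Representation ℚ (Wgroup (n + 1)) (wCoinvGrade (n + 1) i)}
    {ψgr : wCoinvGrade (n + 1) i →ₗ[ℚ] wCoinvGrade n i}
    (hc : CompatRho ρgr) (hp : CompatPsi ψgr) :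
    ∃ W : Submodule ℚ (wCoinvGrade (n + 1) i),
      Function.Injective (ψgr ∘ₗ W.subtype) ∧
      LinearMap.range (ψgr ∘ₗ W.subtype) = ⊤ ∧
      Submodule.span ℚ {x : wCoinvGrade (n + 1) i |
        ∃ (w : Wgroup (n + 1)) (y : wCoinvGrade (n + 1) i), y ∈ W ∧ x = ρgr w y} = ⊤ := by
  obtain ⟨e⟩ : Nonempty (Fin (i + 1) × Fin (i + 1) ↪ Fin n) :=
    Function.Embedding.nonempty_of_card_le (by simpa using hn)
  let e' : Fin (i + 1) ↪ Fin (n + 1) :=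
    ⟨fun j => (e (j, 0)).castSucc, fun a b h => by
      have := e.injective (Fin.castSucc_injective _ h)
      exact congrArg Prod.fst this⟩
  let T : homogeneousSubmodule (Fin (i + 1)) ℚ i →ₗ[ℚ] wCoinvGrade (n + 1) i :=
    LinearMap.codRestrict _ (((wSymIdeal (n + 1)).restrictScalars ℚ).mkQ ∘ₗ
      (rename e').toLinearMap ∘ₗ Submodule.subtype _)
      fun p => mkQ_mem_grade (IsHomogeneous.rename_isHomogeneous p.2)
  have hT : ∀ p, (T p : WCoinv (n + 1)) =
    ((wSymIdeal (n + 1)).restrictScalars ℚ).mkQ (rename e' p.1) := fun p => rfl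
  have hdisj : Disjoint (LinearMap.range T) (LinearMap.ker ψgr) := by
    rw [Submodule.disjoint_def]
    rintro _ ⟨p, rfl⟩ hk
    have h1 := hp _ _ (hT p)
    rw [LinearMap.mem_ker.1 hk] at h1
    have h2 : setLastToZero n (rename e' p.1) = rename (fun j => e (j, 0)) p.1 :=
      setLast_rename (fun j => e (j, 0)) p.1
    rw [h2] at h1
    have h3 : rename (fun j => e (j, 0)) p.1 ∈ wSymIdeal n :=
      (Submodule.Quotient.mk_eq_zero ((wSymIdeal n).restrictScalars ℚ)).1 h1.symm
    have h4 : p = 0 := Subtype.ext (rename_inj_of_small e p.2 h3)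
    rw [h4, map_zero]
  obtain ⟨W, hUW, hW⟩ := hdisj.exists_isCompl
  refine ⟨W, ?_, ?_, ?_⟩
  · refine (injective_iff_map_eq_zero _).2 fun x hx => Subtype.ext ?_
    exact (Submodule.disjoint_def.1 hW.disjoint) x.1 x.2 hx
  · rw [LinearMap.range_eq_top]
    intro y
    obtain ⟨x, rfl⟩ := psi_surj hp y
    have hx : x ∈ W ⊔ LinearMap.ker ψgr := by rw [hW.sup_eq_top]; trivial
    obtain ⟨a, ha, b, hb, rfl⟩ := Submodule.mem_sup.1 hx
    refine ⟨⟨a, ha⟩, ?_⟩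
    rw [map_add, LinearMap.mem_ker.1 hb, add_zero]
    rfl
  · rw [eq_top_iff]
    rintro x -
    obtain ⟨p, hph, hx⟩ := grade_lift x
    have hmon : ∀ d ∈ p.support, ((wSymIdeal (n + 1)).restrictScalars ℚ).mkQ
        (monomial d (coeff d p)) ∈ wCoinvGrade (n + 1) i ∧
        ∀ z : wCoinvGrade (n + 1) i, (z : WCoinv (n + 1)) =
          ((wSymIdeal (n + 1)).restrictScalars ℚ).mkQ (monomial d (coeff d p)) →
          z ∈ Submodule.span ℚ {x : wCoinvGrade (n + 1) i |
            ∃ (w : Wgroup (n + 1)) (y : wCoinvGrade (n + 1) i), y ∈ W ∧ x = ρgr w y} := by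
      intro d hd
      obtain ⟨w, q, hq, hdq⟩ := monomial_move (Nat.le_succ i) e' d
        (homog_iff.1 hph d (mem_support_iff.1 hd)) (coeff d p)
      constructor
      · rw [hdq]
        exact mkQ_mem_grade (wPolyRep_homog w (IsHomogeneous.rename_isHomogeneous hq))
      · intro z hz
        refine Submodule.subset_span ⟨w, T ⟨q, hq⟩, hUW ⟨_, rfl⟩, Subtype.ext ?_⟩
        rw [hz, hc w _ _ (hT ⟨q, hq⟩), hdq]
    have hxs : x = ∑ d : p.support, (⟨_, (hmon d.1 d.2).1⟩ : wCoinvGrade (n + 1) i) := by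
      apply Subtype.ext
      rw [hx, AddSubmonoidClass.coe_finsetSum, ← map_sum,
        Finset.sum_coe_sort p.support (fun d => monomial d (coeff d p)), support_sum_monomial_coeff]
    rw [hxs]
    exact Submodule.sum_mem _ fun d _ => (hmon d.1 d.2).2 _ rfl

end CondII

/-- **Statement 17.** For each fixed `i ≥ 0`, the sequence `{H^i(F′_n;ℚ)}` of cohomology
groups of the Lagrangian flag varieties, identified via Borel's theorem with the graded
pieces of the coinvariant algebras of the hyperoctahedral Weyl groups `W_n`, is
representation stable in the reversed-maps sense for the maps induced by `F′_n ↪ F′_{n+1}`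
(i.e. by `x_{n+1} ↦ 0` on coinvariant algebras): the maps are eventually surjective and
split by subspaces with spanning `W_{n+1}`-orbit, and for each double partition `λ` the
multiplicity of `V(λ)_n` is eventually constant. -/
theorem lagrangian_flag_coinvariant_stability (S : WnIrrSystem) (i : ℕ)
    -- the induced `W_n`-action on the coinvariant algebra
    (ρbar : ∀ n, Representation ℚ (Wgroup n) (WCoinv n))
    (hρbar : ∀ n (w : Wgroup n) (p : MvPolynomial (Fin n) ℚ),
      ρbar n w (((wSymIdeal n).restrictScalars ℚ).mkQ p) =
        ((wSymIdeal n).restrictScalars ℚ).mkQ (wPolyRep n w p))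
    -- its restriction to the degree-`i` graded piece
    (ρgr : ∀ n, Representation ℚ (Wgroup n) ↥(wCoinvGrade n i))
    (hρgr : ∀ n w (x : ↥(wCoinvGrade n i)), (↑(ρgr n w x) : WCoinv n) = ρbar n w ↑x)
    -- the reversed map on coinvariant algebras induced by `x_{n+1} ↦ 0`
    (ψ : ∀ n, WCoinv (n + 1) →ₗ[ℚ] WCoinv n)
    (hψ : ∀ n (p : MvPolynomial (Fin (n + 1)) ℚ),
      ψ n (((wSymIdeal (n + 1)).restrictScalars ℚ).mkQ p) =
        ((wSymIdeal n).restrictScalars ℚ).mkQ (setLastToZero n p))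
    -- its restriction to the degree-`i` graded pieces
    (ψgr : ∀ n, ↥(wCoinvGrade (n + 1) i) →ₗ[ℚ] ↥(wCoinvGrade n i))
    (hψgr : ∀ n (x : ↥(wCoinvGrade (n + 1) i)), (↑(ψgr n x) : WCoinv n) = ψ n ↑x) :
    -- consistency: the reversed maps are equivariant for `W_n ⊆ W_{n+1}`
    (∀ n (w : Wgroup n) (x : ↥(wCoinvGrade (n + 1) i)),
      ψgr n (ρgr (n + 1) (inclW n w) x) = ρgr n w (ψgr n x)) ∧
    -- Condition I′ (surjectivity) and Condition II′ (split injectivity, spanning orbit)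
    (∃ N, ∀ n, N ≤ n →
      Function.Surjective (ψgr n) ∧
      ∃ W : Submodule ℚ ↥(wCoinvGrade (n + 1) i),
        Function.Injective ((ψgr n) ∘ₗ W.subtype) ∧
        LinearMap.range ((ψgr n) ∘ₗ W.subtype) = ⊤ ∧
        Submodule.span ℚ {x : ↥(wCoinvGrade (n + 1) i) |
          ∃ (w : Wgroup (n + 1)) (y : ↥(wCoinvGrade (n + 1) i)),
            y ∈ W ∧ x = ρgr (n + 1) w y} = ⊤) ∧
    -- Condition III: multiplicity stability for each double partition
    (∀ lam : DoublePartition, ∃ N, lam.minN ≤ N ∧ ∀ n, N ≤ n →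
      S.mult lam (ρgr n) = S.mult lam (ρgr N)) := by
  have hc : ∀ n, CompatRho (ρgr n) := fun n w x p hx => by
    rw [hρgr, hx, hρbar]
  have hp : ∀ n, CompatPsi (ψgr n) := fun n x p hx => by
    rw [hψgr, hx, hψ]
  refine ⟨fun n w x => compat_consistent (hc n) (hc (n + 1)) (hp n) w x,
    ⟨(i + 1) * (i + 1), fun n hn => ⟨psi_surj (hp n), cond_two hn (hc (n + 1)) (hp n)⟩⟩,
    fun lam => ?_⟩
  have hfin : ∀ n, Module.Finite ℚ (S.V lam n) := fun n => by
    have := Wgroup_finite n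
    infer_instance
  have hbr : ∀ n, ∃ f : ↥(S.V lam n) →ₗ[ℚ] ↥(S.V lam (n + 1)), lam.minN ≤ n →
      f ≠ 0 ∧ ∀ w v, f (S.rep lam n w v) = S.rep lam (n + 1) (inclW n w) (f v) := fun n => by
    by_cases h : lam.minN ≤ n
    · obtain ⟨f, hf0, hf⟩ := S.branch lam n h
      exact ⟨f, fun _ => ⟨hf0, hf⟩⟩
    · exact ⟨0, fun h' => absurd h' h⟩
  choose ι hι using hbr
  exact mult_stable (ρ := fun n => S.rep lam n) (ι := ι) (N := lam.minN)
    (fun n hn => S.irr lam n hn) (fun n hn => (hι n hn).1) (fun n hn => (hι n hn).2) i hc hp
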